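/- arXiv:1311.0301 — 4 statements merged into one kernel-verified Lean document; each statement's English description precedes it below -/
import Mathlib

section
/- Let d ≥ 1, M > 2d+2, and C₁, c > 0. Then there exists C > 0, depending only on d, M, C₁, c, such that for every t ∈ (0,1], every nonempty bounded measurable set Q ⊆ ℝ^d with diam(Q) ≤ C₁ t and |Q| ≥ c t^d, and every continuously differentiable function u : ℝ^d → ℂ, one has ∫_{ℝ^d} |u(x) − u_Q|² ⟨dist(x,Q)/t⟩^{−M} dx ≤ C ∫_{ℝ^d} |t ∇u(x)|² ⟨dist(x,Q)/t⟩^{2d+2−M} dx, where u_Q := |Q|^{−1} ∫_Q u is the mean value of u over Q. -/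
open MeasureTheory Metric Set
open scoped ENNReal

/-!
By Jensen's inequality and the fundamental theorem of calculus, `|u(x) - u_Q|^p` is at most the mean
over `y ∈ Q` of `|x - y|^p ∫₀¹ |∇u(z)|^p dθ`, where `z = (1 - θ) x + θ y`. Put
`ρ = ⟨dist(·, Q)/t⟩`. For `y ∈ Q` one has `|x - y| ≲ t ρ(x)` and `ρ(z) ≲ ρ(x)`, so of the decay
`ρ(x)^{-M}` a factor `ρ(x)^{-p}` pays for `|x - y|^p`, a factor `ρ(x)^{-m}` with `m > d` is kept,
and the rest is transferred to `z`.

It remains to integrate a function of `z` against the measures `ρ(x)^{-m} dx` on `ℝ^d` and `dy` on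
`Q`, both dominated by Lebesgue measure. If `θ ≥ 1/2`, then `y ↦ z` changes volumes by a factor of
at least `2^{-d}`; if `θ ≤ 1/2`, then `x ↦ z` does. This costs the total mass of the other measure,
which is `|Q|` or, since `m > d`, `≲ t^d ≲ |Q|`, and the division by `|Q|` in the mean compensates
for it. The stated exponents are `p = 2` and `m = 2d`.
-/

open AffineMap (lineMap)
open Module (finrank)

section Averages

variable {α F : Type*} [MeasurableSpace α] {μ : Measure α} {p : ℝ}

lemma rpow_lintegral_le_lintegral_rpow [IsProbabilityMeasure μ] {f : α → ℝ≥0∞}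
    (hf : AEMeasurable f μ) (hp : 1 ≤ p) : (∫⁻ a, f a ∂μ) ^ p ≤ ∫⁻ a, f a ^ p ∂μ := by
  have hp0 : 0 < p := one_pos.trans_le hp
  have h := eLpNorm'_le_eLpNorm'_of_exponent_le one_pos hp μ hf.aestronglyMeasurable
  simp only [eLpNorm'_eq_lintegral_enorm, enorm_eq_self, ENNReal.rpow_one, div_one, one_div] at h
  exact (ENNReal.le_rpow_inv_iff hp0).1 h

variable [NormedAddCommGroup F] [NormedSpace ℝ F] [CompleteSpace F] {f : α → F}

lemma enorm_sub_integral_rpow_le [IsProbabilityMeasure μ] (hf : Integrable f μ) (hp : 1 ≤ p)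
    (v : F) : ‖v - ∫ y, f y ∂μ‖ₑ ^ p ≤ ∫⁻ y, ‖v - f y‖ₑ ^ p ∂μ := by
  have hvf : Integrable (fun y => v - f y) μ := (integrable_const v).sub hf
  calc ‖v - ∫ y, f y ∂μ‖ₑ ^ p
      = ‖∫ y, (v - f y) ∂μ‖ₑ ^ p := by simp [integral_sub (integrable_const v) hf]
    _ ≤ (∫⁻ y, ‖v - f y‖ₑ ∂μ) ^ p := by
        gcongr
        exact enorm_integral_le_lintegral_enorm _
    _ ≤ ∫⁻ y, ‖v - f y‖ₑ ^ p ∂μ :=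
        rpow_lintegral_le_lintegral_rpow hvf.aestronglyMeasurable.enorm hp

lemma enorm_sub_setAverage_rpow_le {s : Set α} (hf : IntegrableOn f s μ) (h0 : μ s ≠ 0)
    (htop : μ s ≠ ∞) (hp : 1 ≤ p) (v : F) :
    ‖v - ⨍ y in s, f y ∂μ‖ₑ ^ p ≤ ⨍⁻ y in s, ‖v - f y‖ₑ ^ p ∂μ := by
  have : IsFiniteMeasure (μ.restrict s) := ⟨by simpa using htop.lt_top⟩
  have : NeZero (μ.restrict s) := ⟨by simpa [Measure.restrict_eq_zero] using h0⟩
  exact enorm_sub_integral_rpow_le hf.to_average hp v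

end Averages

lemma enorm_sub_rpow_le_lintegral_fderiv_lineMap {E F : Type*} [NormedAddCommGroup E]
    [NormedSpace ℝ E] [NormedAddCommGroup F] [NormedSpace ℝ F] {u : E → F} {p : ℝ}
    (hu : ContDiff ℝ 1 u) (hp : 1 ≤ p) (x y : E) :
    ‖u x - u y‖ₑ ^ p ≤
      ∫⁻ θ in Icc (0 : ℝ) 1, (‖fderiv ℝ u (lineMap x y θ)‖ₑ * ‖x - y‖ₑ) ^ p := by
  have hprob : IsProbabilityMeasure (volume.restrict (Icc (0 : ℝ) 1)) := ⟨by simp⟩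
  have hline : ContDiff ℝ 1 (lineMap x y : ℝ → E) := by
    simpa only [AffineMap.lineMap_apply_module] using by fun_prop
  have hderiv (θ : ℝ) :
      ‖deriv (u ∘ lineMap x y) θ‖ₑ ≤ ‖fderiv ℝ u (lineMap x y θ)‖ₑ * ‖x - y‖ₑ := by
    rw [((hu.differentiable one_ne_zero _).hasFDerivAt.comp_hasDerivAt θ
      AffineMap.hasDerivAt_lineMap).deriv, ← enorm_neg (x - y), neg_sub]
    exact ContinuousLinearMap.le_opENorm _ _
  calc ‖u x - u y‖ₑ ^ p
      ≤ (∫⁻ θ in Icc (0 : ℝ) 1, ‖deriv (u ∘ lineMap x y) θ‖ₑ) ^ p := by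
        gcongr
        rw [← enorm_neg, neg_sub]
        simpa using enorm_sub_le_lintegral_deriv_of_contDiffOn_Icc
          (hu.comp hline).contDiffOn zero_le_one
    _ ≤ ∫⁻ θ in Icc (0 : ℝ) 1, ‖deriv (u ∘ lineMap x y) θ‖ₑ ^ p :=
        rpow_lintegral_le_lintegral_rpow
          ((hu.comp hline).continuous_deriv le_rfl).enorm.measurable.aemeasurable hp
    _ ≤ ∫⁻ θ in Icc (0 : ℝ) 1, (‖fderiv ℝ u (lineMap x y θ)‖ₑ * ‖x - y‖ₑ) ^ p := by
        gcongr with θ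
        exact hderiv θ

section Segments

variable {E : Type*} [NormedAddCommGroup E] [NormedSpace ℝ E] [MeasurableSpace E] [BorelSpace E]

lemma measurable_comp_lineMap [SecondCountableTopology E] {f : E → ℝ≥0∞} (hf : Measurable f) :
    Measurable fun q : (E × E) × ℝ => f (lineMap q.1.1 q.1.2 q.2) :=
  hf.comp (Continuous.measurable (by fun_prop))

variable [FiniteDimensional ℝ E] (μ : Measure E) [μ.IsAddHaarMeasure]

lemma lintegral_comp_lineMap {f : E → ℝ≥0∞} (hf : Measurable f) (x : E) {θ : ℝ} (hθ : 0 < θ) :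
    ∫⁻ y, f (lineMap x y θ) ∂μ = ENNReal.ofReal θ⁻¹ ^ finrank ℝ E * ∫⁻ z, f z ∂μ :=
  calc ∫⁻ y, f (lineMap x y θ) ∂μ
      = ∫⁻ y, f ((1 - θ) • x + θ • y) ∂μ := by simp only [AffineMap.lineMap_apply_module]
    _ = ∫⁻ z, f ((1 - θ) • x + z) ∂(μ.map (θ • ·)) :=
        (lintegral_map (f := fun z => f ((1 - θ) • x + z)) (by fun_prop)
          (measurable_const_smul θ)).symm
    _ = ENNReal.ofReal θ⁻¹ ^ finrank ℝ E * ∫⁻ z, f z ∂μ := by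
        rw [Measure.map_addHaar_smul μ hθ.ne', lintegral_smul_measure, lintegral_add_left_eq_self,
          smul_eq_mul, abs_of_pos (by positivity), ← inv_pow, ENNReal.ofReal_pow (by positivity)]

lemma lintegral_comp_lineMap_le {f : E → ℝ≥0∞} (hf : Measurable f) (x : E) {θ : ℝ}
    (hθ : 1 / 2 ≤ θ) :
    ∫⁻ y, f (lineMap x y θ) ∂μ ≤ 2 ^ finrank ℝ E * ∫⁻ z, f z ∂μ := by
  have hθ0 : 0 < θ := by linarith
  rw [lintegral_comp_lineMap μ hf x hθ0]
  gcongr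
  exact ENNReal.ofReal_le_ofNat.2 ((inv_le_comm₀ hθ0 two_pos).2 (by simpa using hθ))

variable {μ} {ν₁ ν₂ : Measure E}

lemma lintegral_lintegral_comp_lineMap_le_of_half_le {f : E → ℝ≥0∞} (hf : Measurable f)
    (h₂ : ν₂ ≤ μ) {θ : ℝ} (hθ : 1 / 2 ≤ θ) :
    ∫⁻ x, ∫⁻ y, f (lineMap x y θ) ∂ν₂ ∂ν₁ ≤ 2 ^ finrank ℝ E * ν₁ univ * ∫⁻ z, f z ∂μ :=
  calc ∫⁻ x, ∫⁻ y, f (lineMap x y θ) ∂ν₂ ∂ν₁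
      ≤ ∫⁻ _, 2 ^ finrank ℝ E * ∫⁻ z, f z ∂μ ∂ν₁ := lintegral_mono fun x =>
        (lintegral_mono' h₂ le_rfl).trans (lintegral_comp_lineMap_le μ hf x hθ)
    _ = 2 ^ finrank ℝ E * ν₁ univ * ∫⁻ z, f z ∂μ := by
        rw [lintegral_const]
        ring

variable [SFinite ν₁] [SFinite ν₂]

lemma lintegral_lintegral_comp_lineMap_le {f : E → ℝ≥0∞} (hf : Measurable f)
    (h₁ : ν₁ ≤ μ) (h₂ : ν₂ ≤ μ) (θ : ℝ) :
    ∫⁻ x, ∫⁻ y, f (lineMap x y θ) ∂ν₂ ∂ν₁ ≤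
      2 ^ finrank ℝ E * (ν₁ univ + ν₂ univ) * ∫⁻ z, f z ∂μ := by
  rcases le_total (1 / 2) θ with hθ | hθ
  · refine (lintegral_lintegral_comp_lineMap_le_of_half_le hf h₂ hθ).trans ?_
    gcongr
    exact le_self_add
  · have hmeas : Measurable fun q : E × E => f (lineMap q.1 q.2 θ) :=
      (measurable_comp_lineMap hf).comp (measurable_id.prodMk measurable_const)
    calc ∫⁻ x, ∫⁻ y, f (lineMap x y θ) ∂ν₂ ∂ν₁
        = ∫⁻ y, ∫⁻ x, f (lineMap y x (1 - θ)) ∂ν₁ ∂ν₂ := by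
          simp only [AffineMap.lineMap_apply_one_sub]
          exact lintegral_lintegral_swap hmeas.aemeasurable
      _ ≤ 2 ^ finrank ℝ E * ν₂ univ * ∫⁻ z, f z ∂μ :=
          lintegral_lintegral_comp_lineMap_le_of_half_le hf h₁ (by linarith)
      _ ≤ 2 ^ finrank ℝ E * (ν₁ univ + ν₂ univ) * ∫⁻ z, f z ∂μ := by
          gcongr
          exact le_add_self

lemma lintegral_lintegral_segment_le {f : E → ℝ≥0∞} (hf : Measurable f)
    (h₁ : ν₁ ≤ μ) (h₂ : ν₂ ≤ μ) :
    ∫⁻ x, ∫⁻ y, (∫⁻ θ in Icc (0 : ℝ) 1, f (lineMap x y θ)) ∂ν₂ ∂ν₁ ≤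
      2 ^ finrank ℝ E * (ν₁ univ + ν₂ univ) * ∫⁻ z, f z ∂μ := by
  have hmeas := measurable_comp_lineMap hf
  have hmeas_inner (x : E) : Measurable fun q : E × ℝ => f (lineMap x q.1 q.2) :=
    hmeas.comp (by fun_prop : Measurable fun q : E × ℝ => ((x, q.1), q.2))
  have hmeas_outer : Measurable fun q : E × ℝ => ∫⁻ y, f (lineMap q.1 y q.2) ∂ν₂ :=
    (hmeas.comp (by fun_prop : Measurable fun q : (E × ℝ) × E =>
      ((q.1.1, q.2), q.1.2))).lintegral_prod_right'
  calc ∫⁻ x, ∫⁻ y, (∫⁻ θ in Icc (0 : ℝ) 1, f (lineMap x y θ)) ∂ν₂ ∂ν₁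
      = ∫⁻ x, (∫⁻ θ in Icc (0 : ℝ) 1, ∫⁻ y, f (lineMap x y θ) ∂ν₂) ∂ν₁ :=
        lintegral_congr fun x => lintegral_lintegral_swap (hmeas_inner x).aemeasurable
    _ = ∫⁻ θ in Icc (0 : ℝ) 1, ∫⁻ x, ∫⁻ y, f (lineMap x y θ) ∂ν₂ ∂ν₁ :=
        lintegral_lintegral_swap hmeas_outer.aemeasurable
    _ ≤ ∫⁻ _ in Icc (0 : ℝ) 1, 2 ^ finrank ℝ E * (ν₁ univ + ν₂ univ) * ∫⁻ z, f z ∂μ :=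
        lintegral_mono (lintegral_lintegral_comp_lineMap_le hf h₁ h₂)
    _ = 2 ^ finrank ℝ E * (ν₁ univ + ν₂ univ) * ∫⁻ z, f z ∂μ := by simp

end Segments

/-- The weight `⟨dist(x, s) / t⟩`, where `⟨r⟩ = 1 + |r|`; it measures the distance to `s` at the
scale `t`. No absolute value is taken, since `t` is always positive. -/
noncomputable def distBracket {X : Type*} [PseudoMetricSpace X] (t : ℝ) (s : Set X) (x : X) : ℝ :=
  1 + infDist x s / t

section DistBracket

variable {X : Type*} [PseudoMetricSpace X] {s : Set X} {t C₁ : ℝ} {x y z : X}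

lemma one_le_distBracket (ht : 0 ≤ t) : 1 ≤ distBracket t s x :=
  le_add_of_nonneg_right (div_nonneg infDist_nonneg ht)

lemma distBracket_pos (ht : 0 ≤ t) : 0 < distBracket t s x :=
  one_pos.trans_le (one_le_distBracket ht)

@[fun_prop]
lemma continuous_distBracket : Continuous (distBracket t s) := by
  unfold distBracket
  fun_prop

lemma distBracket_le_one_add_dist_div (ht : 0 ≤ t) (hy : y ∈ s) :
    distBracket t s x ≤ 1 + dist x y / t := by
  unfold distBracket
  gcongr
  exact infDist_le_dist_of_mem hy

lemma one_add_dist_div_le_mul_distBracket (ht : 0 < t) (hs : Bornology.IsBounded s)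
    (hdiam : diam s ≤ C₁ * t) (hy : y ∈ s) :
    1 + dist x y / t ≤ (1 + C₁) * distBracket t s x := by
  have hC₁ : 0 ≤ C₁ := nonneg_of_mul_nonneg_left (diam_nonneg.trans hdiam) ht
  have hdist : dist x y / t ≤ infDist x s / t + C₁ := by
    rw [div_add' _ _ _ ht.ne']
    gcongr
    linarith [dist_le_infDist_add_diam (x := x) hs hy]
  calc 1 + dist x y / t ≤ distBracket t s x + C₁ * 1 := by
        unfold distBracket
        linarith
    _ ≤ distBracket t s x + C₁ * distBracket t s x := by
        gcongr
        exact one_le_distBracket ht.le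
    _ = (1 + C₁) * distBracket t s x := by ring

lemma dist_le_mul_distBracket (ht : 0 < t) (hs : Bornology.IsBounded s)
    (hdiam : diam s ≤ C₁ * t) (hy : y ∈ s) :
    dist x y ≤ (1 + C₁) * distBracket t s x * t := by
  rw [← div_le_iff₀ ht]
  linarith [one_add_dist_div_le_mul_distBracket (x := x) ht hs hdiam hy]

lemma distBracket_le_mul_distBracket (ht : 0 < t) (hs : Bornology.IsBounded s)
    (hdiam : diam s ≤ C₁ * t) (hy : y ∈ s) (hz : dist z y ≤ dist x y) :
    distBracket t s z ≤ (1 + C₁) * distBracket t s x :=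
  calc distBracket t s z ≤ 1 + dist z y / t := distBracket_le_one_add_dist_div ht.le hy
    _ ≤ 1 + dist x y / t := by gcongr
    _ ≤ (1 + C₁) * distBracket t s x := one_add_dist_div_le_mul_distBracket ht hs hdiam hy

lemma distBracket_rpow_neg_le_one {m : ℝ} (ht : 0 ≤ t) (hm : 0 ≤ m) :
    distBracket t s x ^ (-m) ≤ 1 :=
  Real.rpow_le_one_of_one_le_of_nonpos (one_le_distBracket ht) (neg_nonpos.2 hm)

end DistBracket

section Weights

lemma rpow_neg_le_mul_rpow_neg {ρ σ K r : ℝ} (hρ : 0 < ρ) (hσ : 0 < σ) (hK : 0 < K)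
    (h : σ ≤ K * ρ) (hr : 0 ≤ r) : ρ ^ (-r) ≤ K ^ r * σ ^ (-r) :=
  calc ρ ^ (-r) = K ^ r * (K * ρ) ^ (-r) := by
        rw [Real.mul_rpow hK.le hρ.le, ← mul_assoc, ← Real.rpow_add hK, add_neg_cancel,
          Real.rpow_zero, one_mul]
    _ ≤ K ^ r * σ ^ (-r) :=
        mul_le_mul_of_nonneg_left (Real.rpow_le_rpow_of_nonpos hσ h (neg_nonpos.2 hr))
          (by positivity)

lemma mul_rpow_mul_rpow_neg_le {D N t K ρ σ p m M : ℝ} (hD : 0 ≤ D) (hN : 0 ≤ N) (ht : 0 ≤ t)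
    (hK : 0 < K) (hρ : 0 < ρ) (hσ : 0 < σ) (hNρ : N ≤ K * ρ * t) (hσρ : σ ≤ K * ρ) (hp : 0 ≤ p)
    (hM : m + p ≤ M) :
    (D * N) ^ p * ρ ^ (-M) ≤
      K ^ (M - m) * (ρ ^ (-m) * ((t * D) ^ p * σ ^ (m + p - M))) := by
  have hsplit : ρ ^ p * ρ ^ (-M) = ρ ^ (-m) * ρ ^ (-(M - m - p)) := by
    rw [← Real.rpow_add hρ, ← Real.rpow_add hρ]
    ring_nf
  have htransfer : ρ ^ (-(M - m - p)) ≤ K ^ (M - m - p) * σ ^ (m + p - M) := by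
    simpa only [show -(M - m - p) = m + p - M by ring] using
      rpow_neg_le_mul_rpow_neg hρ hσ hK hσρ (by linarith : 0 ≤ M - m - p)
  calc (D * N) ^ p * ρ ^ (-M)
      ≤ (D * (K * ρ * t)) ^ p * ρ ^ (-M) := by gcongr
    _ = K ^ p * (t * D) ^ p * (ρ ^ p * ρ ^ (-M)) := by
        rw [show D * (K * ρ * t) = K * (t * D) * ρ by ring,
          Real.mul_rpow (by positivity) hρ.le, Real.mul_rpow hK.le (by positivity)]
        ring
    _ ≤ K ^ p * (t * D) ^ p * (ρ ^ (-m) * (K ^ (M - m - p) * σ ^ (m + p - M))) := by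
        rw [hsplit]
        gcongr
    _ = (K ^ p * K ^ (M - m - p)) * (ρ ^ (-m) * ((t * D) ^ p * σ ^ (m + p - M))) := by ring
    _ = K ^ (M - m) * (ρ ^ (-m) * ((t * D) ^ p * σ ^ (m + p - M))) := by
        rw [← Real.rpow_add hK]
        ring_nf

end Weights

section WeightIntegral

variable {E : Type*} [NormedAddCommGroup E] [NormedSpace ℝ E] [FiniteDimensional ℝ E]
  [MeasurableSpace E] [BorelSpace E] (μ : Measure E) [μ.IsAddHaarMeasure]

lemma lintegral_one_add_dist_div_rpow (q : E) {t : ℝ} (ht : 0 < t) (r : ℝ) :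
    ∫⁻ x, ENNReal.ofReal ((1 + dist x q / t) ^ r) ∂μ =
      ENNReal.ofReal t ^ finrank ℝ E * ∫⁻ x, ENNReal.ofReal ((1 + ‖x‖) ^ r) ∂μ := by
  have hscale (x : E) : dist x q / t = ‖lineMap q x t⁻¹ - q‖ := by
    rw [← dist_eq_norm, dist_lineMap_left, Real.norm_of_nonneg (by positivity), dist_comm,
      div_eq_inv_mul]
  have hmeas : Measurable fun z : E => ENNReal.ofReal ((1 + ‖z - q‖) ^ r) := by fun_prop
  simp only [hscale]
  rw [lintegral_comp_lineMap μ hmeas q (inv_pos.2 ht), inv_inv,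
    lintegral_sub_right_eq_self (fun z => ENNReal.ofReal ((1 + ‖z‖) ^ r)) q]

lemma lintegral_distBracket_rpow_neg_le {s : Set E} {t C₁ m : ℝ} (hne : s.Nonempty)
    (hs : Bornology.IsBounded s) (ht : 0 < t) (hdiam : diam s ≤ C₁ * t) (hm : 0 ≤ m) :
    ∫⁻ x, ENNReal.ofReal (distBracket t s x ^ (-m)) ∂μ ≤
      ENNReal.ofReal ((1 + C₁) ^ m) *
        (ENNReal.ofReal t ^ finrank ℝ E * ∫⁻ x, ENNReal.ofReal ((1 + ‖x‖) ^ (-m)) ∂μ) := by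
  obtain ⟨q, hq⟩ := hne
  have hC₁ : 0 ≤ C₁ := nonneg_of_mul_nonneg_left (diam_nonneg.trans hdiam) ht
  rw [← lintegral_one_add_dist_div_rpow μ q ht, ← lintegral_const_mul' _ _ ENNReal.ofReal_ne_top]
  refine lintegral_mono fun x => ?_
  rw [← ENNReal.ofReal_mul (by positivity)]
  exact ENNReal.ofReal_le_ofReal (rpow_neg_le_mul_rpow_neg (distBracket_pos ht.le)
    (by positivity) (by positivity) (one_add_dist_div_le_mul_distBracket ht hs hdiam hq) hm)

end WeightIntegral

section WeightedPoincare

variable {E F : Type*} [NormedAddCommGroup E] [NormedSpace ℝ E] [NormedAddCommGroup F]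
  [NormedSpace ℝ F]

/-- The density `|t ∇u|^p ⟨dist(·, Q)/t⟩^r`, valued in `ℝ≥0∞` so that it can be integrated without
integrability conditions. -/
noncomputable def gradientDensity (u : E → F) (Q : Set E) (t p r : ℝ) (x : E) : ℝ≥0∞ :=
  ENNReal.ofReal (‖t • fderiv ℝ u x‖ ^ p * distBracket t Q x ^ r)

variable {u : E → F} {Q : Set E} {t C₁ p m M : ℝ}

lemma enorm_mul_rpow_mul_distBracket_rpow_neg_le {V : Type*} [NormedAddCommGroup V]
    [NormedSpace ℝ V] {x y : E} (v : V) {θ : ℝ} (hQ : Bornology.IsBounded Q) (ht : 0 < t)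
    (hdiam : diam Q ≤ C₁ * t) (hy : y ∈ Q) (hθ : θ ∈ Icc (0 : ℝ) 1) (hp : 0 ≤ p)
    (hM : m + p ≤ M) :
    ENNReal.ofReal (distBracket t Q x ^ (-M)) * (‖v‖ₑ * ‖x - y‖ₑ) ^ p ≤
      ENNReal.ofReal ((1 + C₁) ^ (M - m)) * (ENNReal.ofReal (distBracket t Q x ^ (-m)) *
        ENNReal.ofReal (‖t • v‖ ^ p * distBracket t Q (lineMap x y θ) ^ (m + p - M))) := by
  have hC₁ : 0 ≤ C₁ := nonneg_of_mul_nonneg_left (diam_nonneg.trans hdiam) ht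
  have hρ (z : E) : 0 < distBracket t Q z := distBracket_pos ht.le
  have hsegment : dist (lineMap x y θ) y ≤ dist x y := by
    rw [dist_lineMap_right, Real.norm_of_nonneg (by linarith [hθ.2])]
    exact mul_le_of_le_one_left dist_nonneg (by linarith [hθ.1])
  have hreal := mul_rpow_mul_rpow_neg_le (norm_nonneg v) dist_nonneg ht.le
    (by linarith : 0 < 1 + C₁) (hρ x) (hρ (lineMap x y θ))
    (dist_le_mul_distBracket ht hQ hdiam hy)
    (distBracket_le_mul_distBracket ht hQ hdiam hy hsegment) hp hM
  rw [← ofReal_norm, ← ofReal_norm, ← ENNReal.ofReal_mul (norm_nonneg _),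
    ENNReal.ofReal_rpow_of_nonneg (by positivity) hp,
    ← ENNReal.ofReal_mul (Real.rpow_nonneg (hρ x).le _),
    ← ENNReal.ofReal_mul (Real.rpow_nonneg (hρ x).le _), ← ENNReal.ofReal_mul (by positivity),
    norm_smul, Real.norm_of_nonneg ht.le, ← dist_eq_norm, mul_comm (distBracket t Q x ^ (-M))]
  exact ENNReal.ofReal_le_ofReal hreal

lemma enorm_sub_rpow_mul_distBracket_rpow_neg_le {x y : E} (hp : 1 ≤ p) (hM : m + p ≤ M)
    (ht : 0 < t) (hQ : Bornology.IsBounded Q) (hdiam : diam Q ≤ C₁ * t) (hu : ContDiff ℝ 1 u)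
    (hy : y ∈ Q) :
    ENNReal.ofReal (distBracket t Q x ^ (-M)) * ‖u x - u y‖ₑ ^ p ≤
      ENNReal.ofReal ((1 + C₁) ^ (M - m)) * (ENNReal.ofReal (distBracket t Q x ^ (-m)) *
        ∫⁻ θ in Icc (0 : ℝ) 1, gradientDensity u Q t p (m + p - M) (lineMap x y θ)) :=
  calc ENNReal.ofReal (distBracket t Q x ^ (-M)) * ‖u x - u y‖ₑ ^ p
      ≤ ENNReal.ofReal (distBracket t Q x ^ (-M)) *
          ∫⁻ θ in Icc (0 : ℝ) 1, (‖fderiv ℝ u (lineMap x y θ)‖ₑ * ‖x - y‖ₑ) ^ p := by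
        gcongr
        exact enorm_sub_rpow_le_lintegral_fderiv_lineMap hu hp x y
    _ = ∫⁻ θ in Icc (0 : ℝ) 1, ENNReal.ofReal (distBracket t Q x ^ (-M)) *
          (‖fderiv ℝ u (lineMap x y θ)‖ₑ * ‖x - y‖ₑ) ^ p :=
        (lintegral_const_mul' _ _ ENNReal.ofReal_ne_top).symm
    _ ≤ ∫⁻ θ in Icc (0 : ℝ) 1, ENNReal.ofReal ((1 + C₁) ^ (M - m)) *
          (ENNReal.ofReal (distBracket t Q x ^ (-m)) *
            gradientDensity u Q t p (m + p - M) (lineMap x y θ)) :=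
        setLIntegral_mono' measurableSet_Icc fun θ hθ =>
          enorm_mul_rpow_mul_distBracket_rpow_neg_le _ hQ ht hdiam hy hθ (by linarith) hM
    _ = ENNReal.ofReal ((1 + C₁) ^ (M - m)) * (ENNReal.ofReal (distBracket t Q x ^ (-m)) *
          ∫⁻ θ in Icc (0 : ℝ) 1, gradientDensity u Q t p (m + p - M) (lineMap x y θ)) := by
        rw [lintegral_const_mul' _ _ ENNReal.ofReal_ne_top,
          lintegral_const_mul' _ _ ENNReal.ofReal_ne_top]

variable [MeasurableSpace E] [BorelSpace E]

lemma measurable_gradientDensity (hu : ContDiff ℝ 1 u) (r : ℝ) :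
    Measurable (gradientDensity u Q t p r) := by
  have hgrad : Measurable fun x => ‖t • fderiv ℝ u x‖ :=
    ((hu.continuous_fderiv one_ne_zero).const_smul t).norm.measurable
  exact ((hgrad.pow_const p).mul
    (continuous_distBracket.measurable.pow_const r)).ennreal_ofReal

variable [FiniteDimensional ℝ E] {μ : Measure E} [μ.IsAddHaarMeasure]

lemma inv_measure_mul_lintegral_distBracket_rpow_neg_le {c : ℝ} (hm : 0 ≤ m) (hc : 0 < c)
    (ht : 0 < t) (hQ : Bornology.IsBounded Q) (hdiam : diam Q ≤ C₁ * t)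
    (hvol : ENNReal.ofReal (c * t ^ finrank ℝ E) ≤ μ Q) :
    (μ Q)⁻¹ * ∫⁻ x, ENNReal.ofReal (distBracket t Q x ^ (-m)) ∂μ ≤
      ENNReal.ofReal ((1 + C₁) ^ m / c) * ∫⁻ x, ENNReal.ofReal ((1 + ‖x‖) ^ (-m)) ∂μ := by
  have hne : Q.Nonempty := nonempty_of_measure_ne_zero
    ((ENNReal.ofReal_pos.2 (by positivity)).trans_le hvol).ne'
  have hC₁ : 0 ≤ C₁ := nonneg_of_mul_nonneg_left (diam_nonneg.trans hdiam) ht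
  calc (μ Q)⁻¹ * ∫⁻ x, ENNReal.ofReal (distBracket t Q x ^ (-m)) ∂μ
      ≤ (ENNReal.ofReal (c * t ^ finrank ℝ E))⁻¹ * (ENNReal.ofReal ((1 + C₁) ^ m) *
          (ENNReal.ofReal t ^ finrank ℝ E * ∫⁻ x, ENNReal.ofReal ((1 + ‖x‖) ^ (-m)) ∂μ)) := by
        gcongr
        exact lintegral_distBracket_rpow_neg_le μ hne hQ ht hdiam hm
    _ = ENNReal.ofReal ((1 + C₁) ^ m / c) * ∫⁻ x, ENNReal.ofReal ((1 + ‖x‖) ^ (-m)) ∂μ := by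
        rw [← ENNReal.ofReal_pow ht.le, ← ENNReal.ofReal_inv_of_pos (by positivity), ← mul_assoc,
          ← mul_assoc, ← ENNReal.ofReal_mul (by positivity), ← ENNReal.ofReal_mul (by positivity)]
        congr 2
        field_simp

variable [CompleteSpace F]

lemma norm_sub_setAverage_rpow_mul_distBracket_rpow_neg_le (hp : 1 ≤ p) (hM : m + p ≤ M)
    (ht : 0 < t) (hQ : Bornology.IsBounded Q) (hdiam : diam Q ≤ C₁ * t) (hQ₀ : μ Q ≠ 0)
    (hu : ContDiff ℝ 1 u) (x : E) :
    ENNReal.ofReal (‖u x - ⨍ y in Q, u y ∂μ‖ ^ p * distBracket t Q x ^ (-M)) ≤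
      ENNReal.ofReal ((1 + C₁) ^ (M - m)) * (μ Q)⁻¹ *
        (ENNReal.ofReal (distBracket t Q x ^ (-m)) * ∫⁻ y in Q, (∫⁻ θ in Icc (0 : ℝ) 1,
          gradientDensity u Q t p (m + p - M) (lineMap x y θ)) ∂μ) := by
  set g : E → ℝ≥0∞ := gradientDensity u Q t p (m + p - M)
  set w : ℝ → ℝ≥0∞ := fun r => ENNReal.ofReal (distBracket t Q x ^ (-r))
  set A : ℝ≥0∞ := ENNReal.ofReal ((1 + C₁) ^ (M - m))
  have hg : Measurable fun y => ∫⁻ θ in Icc (0 : ℝ) 1, g (lineMap x y θ) :=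
    ((measurable_comp_lineMap (measurable_gradientDensity hu _)).comp
      (by fun_prop : Measurable fun q : E × ℝ => ((x, q.1), q.2))).lintegral_prod_right'
  have hint : IntegrableOn u Q μ :=
    (hu.continuous.continuousOn.integrableOn_compact hQ.isCompact_closure).mono_set
      subset_closure
  calc ENNReal.ofReal (‖u x - ⨍ y in Q, u y ∂μ‖ ^ p * distBracket t Q x ^ (-M))
      = w M * ‖u x - ⨍ y in Q, u y ∂μ‖ₑ ^ p := by
        rw [ENNReal.ofReal_mul (by positivity),
          ← ENNReal.ofReal_rpow_of_nonneg (norm_nonneg _) (by linarith), ofReal_norm, mul_comm]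
    _ ≤ w M * ⨍⁻ y in Q, ‖u x - u y‖ₑ ^ p ∂μ := by
        gcongr
        exact enorm_sub_setAverage_rpow_le hint hQ₀ hQ.measure_lt_top.ne hp (u x)
    _ = (μ Q)⁻¹ * ∫⁻ y in Q, w M * ‖u x - u y‖ₑ ^ p ∂μ := by
        rw [setLAverage_eq, lintegral_const_mul' _ _ ENNReal.ofReal_ne_top, div_eq_mul_inv]
        ring
    _ ≤ (μ Q)⁻¹ * ∫⁻ y in Q, A * (w m * ∫⁻ θ in Icc (0 : ℝ) 1, g (lineMap x y θ)) ∂μ :=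
        mul_le_mul_right (setLIntegral_mono ((hg.const_mul _).const_mul _) fun y hy =>
          enorm_sub_rpow_mul_distBracket_rpow_neg_le hp hM ht hQ hdiam hu hy) _
    _ = A * (μ Q)⁻¹ * (w m * ∫⁻ y in Q, (∫⁻ θ in Icc (0 : ℝ) 1, g (lineMap x y θ)) ∂μ) := by
        rw [lintegral_const_mul _ (hg.const_mul _), lintegral_const_mul _ hg]
        ring

lemma lintegral_norm_sub_setAverage_rpow_mul_distBracket_rpow_neg_le (hp : 1 ≤ p) (hm : 0 ≤ m)
    (hM : m + p ≤ M) (ht : 0 < t) (hQ : Bornology.IsBounded Q) (hdiam : diam Q ≤ C₁ * t)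
    (hQ₀ : μ Q ≠ 0) (hu : ContDiff ℝ 1 u) :
    ∫⁻ x, ENNReal.ofReal (‖u x - ⨍ y in Q, u y ∂μ‖ ^ p * distBracket t Q x ^ (-M)) ∂μ ≤
      ENNReal.ofReal ((1 + C₁) ^ (M - m)) *
        (2 ^ finrank ℝ E *
          ((μ Q)⁻¹ * ∫⁻ x, ENNReal.ofReal (distBracket t Q x ^ (-m)) ∂μ + 1)) *
        ∫⁻ x, gradientDensity u Q t p (m + p - M) x ∂μ := by
  set g : E → ℝ≥0∞ := gradientDensity u Q t p (m + p - M)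
  set w : E → ℝ≥0∞ := fun x => ENNReal.ofReal (distBracket t Q x ^ (-m))
  set A : ℝ≥0∞ := ENNReal.ofReal ((1 + C₁) ^ (M - m))
  have hQ_top : μ Q ≠ ∞ := hQ.measure_lt_top.ne
  have hA : A * (μ Q)⁻¹ ≠ ∞ :=
    ENNReal.mul_ne_top ENNReal.ofReal_ne_top (ENNReal.inv_ne_top.2 hQ₀)
  have hw : Measurable w :=
    (continuous_distBracket.measurable.pow_const (-m)).ennreal_ofReal
  have hwμ : μ.withDensity w ≤ μ :=
    (withDensity_mono (.of_forall fun x =>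
      ENNReal.ofReal_le_one.2 (distBracket_rpow_neg_le_one ht.le hm))).trans withDensity_one.le
  calc ∫⁻ x, ENNReal.ofReal (‖u x - ⨍ y in Q, u y ∂μ‖ ^ p * distBracket t Q x ^ (-M)) ∂μ
      ≤ ∫⁻ x, A * (μ Q)⁻¹ *
          (w x * ∫⁻ y in Q, (∫⁻ θ in Icc (0 : ℝ) 1, g (lineMap x y θ)) ∂μ) ∂μ :=
        lintegral_mono
          (norm_sub_setAverage_rpow_mul_distBracket_rpow_neg_le hp hM ht hQ hdiam hQ₀ hu)
    _ = A * (μ Q)⁻¹ * ∫⁻ x, ∫⁻ y in Q, (∫⁻ θ in Icc (0 : ℝ) 1, g (lineMap x y θ)) ∂μ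
          ∂μ.withDensity w := by
        rw [lintegral_const_mul' _ _ hA, lintegral_withDensity_eq_lintegral_mul_non_measurable μ hw
          (.of_forall fun _ => ENNReal.ofReal_lt_top)]
        rfl
    _ ≤ A * (μ Q)⁻¹ * (2 ^ finrank ℝ E * (μ.withDensity w univ + μ.restrict Q univ) *
          ∫⁻ z, g z ∂μ) := by
        gcongr
        exact lintegral_lintegral_segment_le
          (measurable_gradientDensity hu _) hwμ Measure.restrict_le_self
    _ = A * (2 ^ finrank ℝ E * ((μ Q)⁻¹ * ∫⁻ x, w x ∂μ + 1)) * ∫⁻ z, g z ∂μ := by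
        rw [withDensity_apply _ .univ, Measure.restrict_univ, Measure.restrict_apply_univ,
          ← ENNReal.inv_mul_cancel hQ₀ hQ_top]
        ring

end WeightedPoincare

theorem weighted_poincare_inequality_general {E F : Type*} [NormedAddCommGroup E]
    [NormedSpace ℝ E] [FiniteDimensional ℝ E] [MeasurableSpace E] [BorelSpace E]
    [NormedAddCommGroup F] [NormedSpace ℝ F] [CompleteSpace F]
    (μ : Measure E) [μ.IsAddHaarMeasure] {p m M C₁ c : ℝ} (hp : 1 ≤ p)
    (hm : finrank ℝ E < m) (hM : m + p ≤ M) (hC₁ : 0 ≤ C₁) (hc : 0 < c) :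
    ∃ C > 0, ∀ t : ℝ, 0 < t → ∀ Q : Set E, Bornology.IsBounded Q → diam Q ≤ C₁ * t →
      ENNReal.ofReal (c * t ^ finrank ℝ E) ≤ μ Q → ∀ u : E → F, ContDiff ℝ 1 u →
        ∫⁻ x, ENNReal.ofReal (‖u x - ⨍ y in Q, u y ∂μ‖ ^ p * distBracket t Q x ^ (-M)) ∂μ ≤
          ENNReal.ofReal C * ∫⁻ x, ENNReal.ofReal
            (‖t • fderiv ℝ u x‖ ^ p * distBracket t Q x ^ (m + p - M)) ∂μ := by
  have hm₀ : 0 ≤ m := (Nat.cast_nonneg _).trans hm.le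
  set C : ℝ≥0∞ := ENNReal.ofReal ((1 + C₁) ^ (M - m)) * (2 ^ finrank ℝ E *
    (ENNReal.ofReal ((1 + C₁) ^ m / c) * ∫⁻ x : E, ENNReal.ofReal ((1 + ‖x‖) ^ (-m)) ∂μ + 1))
  have hC : C ≠ ∞ := by
    have := (finite_integral_one_add_norm (μ := μ) hm).ne
    finiteness
  have hC₀ : C ≠ 0 := by
    have : 0 < (1 + C₁) ^ (M - m) := by positivity
    simp [C, this]
  refine ⟨C.toReal, ENNReal.toReal_pos hC₀ hC, fun t ht Q hQ hdiam hvol u hu => ?_⟩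
  have hQ₀ : μ Q ≠ 0 := ((ENNReal.ofReal_pos.2 (by positivity)).trans_le hvol).ne'
  rw [ENNReal.ofReal_toReal hC]
  refine (lintegral_norm_sub_setAverage_rpow_mul_distBracket_rpow_neg_le hp hm₀ hM ht hQ hdiam
    hQ₀ hu).trans ?_
  simp only [C]
  gcongr ENNReal.ofReal _ * (_ * (?_ + 1)) * _
  exact inv_measure_mul_lintegral_distBracket_rpow_neg_le hm₀ hc ht hQ hdiam hvol

/-- **Weighted Poincaré inequality** with weights `⟨dist(x,Q)/t⟩` adapted to a dyadic cube `Q`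
of step size `t` (so `diam Q ≤ C₁ t` and `|Q| ≥ c t^d`), for exponents `M > 2d + 2`. -/
theorem weighted_poincare_inequality
    (d : ℕ) (hd : 1 ≤ d) (M C₁ c : ℝ)
    (hM : 2 * (d : ℝ) + 2 < M) (hC₁ : 0 < C₁) (hc : 0 < c) :
    ∃ C > 0, ∀ t : ℝ, 0 < t → t ≤ 1 →
      ∀ Q : Set (EuclideanSpace ℝ (Fin d)),
      Q.Nonempty → MeasurableSet Q → Bornology.IsBounded Q →
      Metric.diam Q ≤ C₁ * t → ENNReal.ofReal (c * t ^ d) ≤ volume Q →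
      ∀ u : EuclideanSpace ℝ (Fin d) → ℂ, ContDiff ℝ 1 u →
        ∫⁻ x, ENNReal.ofReal
            (‖u x - ⨍ y in Q, u y‖ ^ 2 * (1 + infDist x Q / t) ^ (-M)) ≤
          ENNReal.ofReal C *
            ∫⁻ x, ENNReal.ofReal
              (‖t • fderiv ℝ u x‖ ^ 2 * (1 + infDist x Q / t) ^ (2 * (d : ℝ) + 2 - M)) := by
  have hfinrank : (finrank ℝ (EuclideanSpace ℝ (Fin d)) : ℝ) < 2 * d := by
    rw [finrank_euclideanSpace_fin]
    exact_mod_cast (by lia : d < 2 * d)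
  obtain ⟨C, hC, h⟩ :=
    weighted_poincare_inequality_general (F := ℂ) volume one_le_two hfinrank hM.le hC₁.le hc
  exact ⟨C, hC, fun t ht _ Q _ _ hQ hdiam hvol u hu => by
    simpa [distBracket] using h t ht Q hQ hdiam (by simpa) u hu⟩
end

section
/- Let d, N ≥ 1 and let Ω ⊆ ℝ^d be open. Let Υ be a linear operator in L²(Ω; ℂ^N) with domain D(Υ) ⊆ L²(Ω; ℂ^N), and let K > 0 be such that: (i) for every φ ∈ C_c^∞(ℝ^d; ℂ) and every u ∈ D(Υ) one has φu ∈ D(Υ) and |Υ(φu) − φ·Υu| ≤ K |∇φ| |u| almost everywhere on Ω; (ii) for every open ball B centered at a point of Ω and every u ∈ D(Υ) with compact support contained in B ∩ Ω one has |∫_Ω Υu| ≤ K |B|^{1/2} ‖u‖_{L²(Ω;ℂ^N)}. Let η ∈ (0,1], C₁, C₂, c > 0, let t ∈ (0,1], and let Q ⊆ Ω be a measurable set with |Q| ≥ c t^d, contained in an open ball B(z, C₁ t) with z ∈ Ω, and satisfying |{x ∈ Q : dist(x, ℝ^d ∖ Q) ≤ r}| ≤ C₂ (r/t)^{η} |Q|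 for all r > 0. Then there exists a constant C, depending only on d, N, K, η, C₁, C₂, c (and not on t, Q, u), such that for all u ∈ D(Υ): |⨍_Q Υu|² ≤ C [ t^{−η} (⨍_Q |u|²)^{η/2} (⨍_Q |Υu|²)^{1−η/2} + ⨍_Q |u|² ]. -/
open MeasureTheory Metric Set
open scoped ENNReal

/-!
Cut `u` off by a smooth `φ` that is supported in `Q` and equals one outside the boundary strip of
width `r`. The cancellation bound controls `∫ Υ(φu)`, and `1_Q Υu - Υ(φu)` lives on the strip, where
the commutator bound dominates it by `4 K |u| / r + |Υu|`. With `X` and `Y` the root mean squares of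
`u` and `Υu` over `Q`, Cauchy-Schwarz on the strip yields
`|⨍_Q Υu| ≲ X + (r / t) ^ (η / 2) * (X / r + Y)`, and the choice `r = X / Y` balances the last two
terms.
-/

open Filter Module
open scoped NNReal Topology

section BoundaryStrip

variable {X : Type*} [PseudoEMetricSpace X]

/-- The part of `Q` within distance `r` of its complement. The extended distance makes the strip
of the whole space empty. -/
def boundaryStrip (Q : Set X) (r : ℝ) : Set X :=
  {x ∈ Q | infEDist x Qᶜ ≤ ENNReal.ofReal r}

lemma boundaryStrip_subset (Q : Set X) (r : ℝ) : boundaryStrip Q r ⊆ Q :=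
  sep_subset _ _

lemma measurableSet_boundaryStrip [MeasurableSpace X] [OpensMeasurableSpace X] {Q : Set X}
    (hQ : MeasurableSet Q) (r : ℝ) : MeasurableSet (boundaryStrip Q r) :=
  hQ.inter (isClosed_le continuous_infEDist continuous_const).measurableSet

end BoundaryStrip

section Cutoff

variable {E : Type*} [NormedAddCommGroup E] [NormedSpace ℝ E]

lemma exists_contDiff_lipschitzWith_mem_Icc [FiniteDimensional ℝ E] {g : E → ℝ} {L : ℝ≥0}
    (hg : LipschitzWith L g) {a b : ℝ} (hab : ∀ x, g x ∈ Icc a b) {δ : ℝ} (hδ : 0 < δ) :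
    ∃ φ : E → ℝ, ContDiff ℝ (⊤ : ℕ∞) φ ∧ LipschitzWith L φ ∧ (∀ x, φ x ∈ Icc a b) ∧
      ∀ x c, (∀ y ∈ ball x δ, g y = c) → φ x = c := by
  borelize E
  let μ : Measure E := Measure.addHaar
  let ρ : ContDiffBump (0 : E) := ⟨δ / 2, δ, half_pos hδ, half_lt_self hδ⟩
  let φ : E → ℝ := convolution (ρ.normed μ) g (ContinuousLinearMap.lsmul ℝ ℝ) μ
  have hφ (x : E) : φ x = ∫ s, ρ.normed μ s * g (x - s) ∂μ := rfl
  have hg_cont : Continuous g := hg.continuous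
  have hint (x : E) : Integrable (fun s ↦ ρ.normed μ s * g (x - s)) μ :=
    (ρ.continuous_normed.mul (by fun_prop)).integrable_of_hasCompactSupport
      ρ.hasCompactSupport_normed.mul_right
  have hconst (c : ℝ) : ∫ s, ρ.normed μ s * c ∂μ = c := by
    rw [integral_mul_const, ρ.integral_normed, one_mul]
  have hint_const (c : ℝ) : Integrable (fun s ↦ ρ.normed μ s * c) μ :=
    ρ.integrable_normed.mul_const c
  refine ⟨φ, ρ.hasCompactSupport_normed.contDiff_convolution_left _ ρ.contDiff_normed
    hg_cont.locallyIntegrable, LipschitzWith.of_dist_le_mul fun x y ↦ ?_, fun x ↦ ⟨?_, ?_⟩,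
    fun x c hc ↦ ?_⟩
  · rw [hφ, hφ, dist_eq_norm, ← integral_sub (hint x) (hint y), ← hconst (L * dist x y)]
    refine norm_integral_le_of_norm_le (hint_const _) (Eventually.of_forall fun s ↦ ?_)
    rw [← mul_sub, norm_mul, Real.norm_of_nonneg (ρ.nonneg_normed s), ← dist_eq_norm]
    exact mul_le_mul_of_nonneg_left (by simpa using hg.dist_le_mul (x - s) (y - s))
      (ρ.nonneg_normed s)
  · rw [hφ, ← hconst a]
    exact integral_mono (hint_const a) (hint x) fun s ↦
      mul_le_mul_of_nonneg_left (hab _).1 (ρ.nonneg_normed s)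
  · rw [hφ, ← hconst b]
    exact integral_mono (hint x) (hint_const b) fun s ↦
      mul_le_mul_of_nonneg_left (hab _).2 (ρ.nonneg_normed s)
  · have hgx : g x = c := hc x (mem_ball_self hδ)
    rw [← hgx]
    exact ρ.normed_convolution_eq_right fun y hy ↦ (hc y hy).trans hgx.symm

/-- `φ` is a smooth cutoff for `Q` at scale `r`: it is supported in `Q`, equals one on `Q` off the
boundary strip of width `r`, and its gradient is at most `4 / r`. Any constant above `1` could
replace `4`. -/
structure IsSmoothCutoff (Q : Set E) (r : ℝ) (φ : E → ℝ) : Prop where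
  contDiff : ContDiff ℝ (⊤ : ℕ∞) φ
  mem_Icc : ∀ x, φ x ∈ Icc 0 1
  tsupport_subset : tsupport φ ⊆ Q
  eq_one : ∀ x, ENNReal.ofReal r < infEDist x Qᶜ → φ x = 1
  norm_fderiv_le : ∀ x, ‖fderiv ℝ φ x‖ ≤ 4 / r

lemma exists_isSmoothCutoff [FiniteDimensional ℝ E] (Q : Set E) {r : ℝ} (hr : 0 < r) :
    ∃ φ, IsSmoothCutoff Q r φ := by
  have hr4 : 0 < r / 4 := by positivity
  -- `g` climbs from `0` to `1` between the distances `r / 2` and `3 * r / 4` from `Qᶜ`; mollifying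
  -- at scale `r / 4` then leaves `φ` zero up to distance `r / 4` and one beyond distance `r`.
  let A : Set E := thickening (r / 2) Qᶜ
  let g : E → ℝ := fun x ↦ 1 - thickenedIndicator hr4 A x
  have hg : LipschitzWith (r / 4).toNNReal⁻¹ g := by
    refine LipschitzWith.of_dist_le_mul fun x y ↦ ?_
    rw [dist_sub_left]
    exact (lipschitzWith_thickenedIndicator hr4 A).dist_le_mul x y
  have hg_mem (x : E) : g x ∈ Icc 0 1 :=
    ⟨sub_nonneg.2 (mod_cast thickenedIndicator_le_one hr4 A x), sub_le_self _ (NNReal.coe_nonneg _)⟩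
  obtain ⟨φ, hφ_smooth, hφ_lip, hφ_mem, hφ_eq⟩ :=
    exists_contDiff_lipschitzWith_mem_Icc hg hg_mem hr4
  have hφ_zero (x : E) (hx : x ∈ thickening (r / 4) Qᶜ) : φ x = 0 := by
    refine hφ_eq x 0 fun y hy ↦ ?_
    have hyA : y ∈ A := by
      have : y ∈ thickening (r / 4) (thickening (r / 4) Qᶜ) :=
        mem_thickening_iff.2 ⟨x, hx, hy⟩
      exact thickening_mono (by linarith) _ (thickening_thickening_subset _ _ _ this)
    simp only [g, thickenedIndicator_one hr4 A hyA, NNReal.coe_one, sub_self]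
  refine ⟨φ, hφ_smooth, hφ_mem, ?_, fun x hx ↦ ?_, fun x ↦ ?_⟩
  · have hsupport : Function.support φ ⊆ (thickening (r / 4) Qᶜ)ᶜ := fun x hx hx' ↦
      hx (hφ_zero x hx')
    refine (closure_minimal hsupport isOpen_thickening.isClosed_compl).trans ?_
    exact compl_subset_comm.1 (self_subset_thickening hr4 _)
  · refine hφ_eq x 1 fun y hy ↦ ?_
    have hyA : y ∉ thickening (r / 4) A := fun hyA ↦ by
      have : x ∈ thickening (r / 4) (thickening (r / 4 + r / 2) Qᶜ) :=
        mem_thickening_iff.2 ⟨y, thickening_thickening_subset _ _ _ hyA, mem_ball'.1 hy⟩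
      refine hx.not_gt (mem_thickening_iff_infEDist_lt.1 ?_)
      exact thickening_mono (by linarith) _ (thickening_thickening_subset _ _ _ this)
    simp only [g, thickenedIndicator_zero hr4 A hyA, NNReal.coe_zero, sub_zero]
  · rw [← inv_div, ← Real.coe_toNNReal _ hr4.le, ← NNReal.coe_inv]
    exact norm_fderiv_le_of_lipschitz ℝ hφ_lip

lemma IsSmoothCutoff.fderiv_eq_zero {Q : Set E} {r : ℝ} {φ : E → ℝ} (hφ : IsSmoothCutoff Q r φ)
    {x : E} (hx : ENNReal.ofReal r < infEDist x Qᶜ) : fderiv ℝ φ x = 0 := by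
  have hφ_one : φ =ᶠ[𝓝 x] fun _ ↦ 1 :=
    eventually_of_mem ((isOpen_lt continuous_const continuous_infEDist).mem_nhds hx) hφ.eq_one
  rw [hφ_one.fderiv_eq, fderiv_const_apply]

lemma IsSmoothCutoff.norm_indicator_sub_le {F G : Type*} [NormedAddCommGroup F] [NormedSpace ℝ F]
    [NormedAddCommGroup G] {Q : Set E} {r K : ℝ} {φ : E → ℝ} (hφ : IsSmoothCutoff Q r φ)
    (hK : 0 ≤ K) {f g : E → F} {u : E → G} {x : E}
    (hx : ‖g x - φ x • f x‖ ≤ K * ‖fderiv ℝ φ x‖ * ‖u x‖) :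
    ‖Q.indicator f x - g x‖ ≤
      (boundaryStrip Q r).indicator (fun y ↦ K * (4 / r) * ‖u y‖ + ‖f y‖) x := by
  by_cases hxS : x ∈ boundaryStrip Q r
  · obtain ⟨hφ_nonneg, hφ_le_one⟩ := hφ.mem_Icc x
    rw [indicator_of_mem hxS, indicator_of_mem (boundaryStrip_subset Q r hxS)]
    have hcomm : ‖φ x • f x - g x‖ ≤ K * (4 / r) * ‖u x‖ := by
      rw [norm_sub_rev]
      exact hx.trans (by gcongr; exact hφ.norm_fderiv_le x)
    have hcut : ‖f x - φ x • f x‖ ≤ ‖f x‖ := by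
      rw [show f x - φ x • f x = (1 - φ x) • f x by rw [sub_smul, one_smul], norm_smul,
        Real.norm_of_nonneg (sub_nonneg.2 hφ_le_one)]
      exact mul_le_of_le_one_left (norm_nonneg _) (sub_le_self _ hφ_nonneg)
    linarith [norm_sub_le_norm_sub_add_norm_sub (f x) (φ x • f x) (g x)]
  rw [indicator_of_notMem hxS, norm_le_zero_iff, sub_eq_zero]
  by_cases hxQ : x ∈ Q
  · have hxr : ENNReal.ofReal r < infEDist x Qᶜ := not_le.1 fun h ↦ hxS ⟨hxQ, h⟩
    rw [hφ.eq_one x hxr, hφ.fderiv_eq_zero hxr, norm_zero, mul_zero, zero_mul, norm_le_zero_iff,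
      sub_eq_zero, one_smul] at hx
    rw [indicator_of_mem hxQ, hx]
  · have hx_tsupport : x ∉ tsupport φ := fun h ↦ hxQ (hφ.tsupport_subset h)
    rw [image_eq_zero_of_notMem_tsupport hx_tsupport, fderiv_of_notMem_tsupport ℝ hx_tsupport,
      norm_zero, mul_zero, zero_mul, norm_le_zero_iff, sub_eq_zero, zero_smul] at hx
    rw [indicator_of_notMem hxQ, hx]

end Cutoff

section Integral

variable {α F : Type*} [MeasurableSpace α] {μ : Measure α} [NormedAddCommGroup F]

/-- The root mean square of `‖f‖` over `s`, the scale-invariant `L²` norm in which the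
interpolation inequality is homogeneous. -/
noncomputable def rootMeanSquare (μ : Measure α) (s : Set α) (f : α → F) : ℝ :=
  √(⨍ x in s, ‖f x‖ ^ 2 ∂μ)

lemma rootMeanSquare_nonneg (s : Set α) (f : α → F) : 0 ≤ rootMeanSquare μ s f :=
  Real.sqrt_nonneg _

lemma sq_rootMeanSquare (s : Set α) (f : α → F) :
    rootMeanSquare μ s f ^ 2 = ⨍ x in s, ‖f x‖ ^ 2 ∂μ :=
  Real.sq_sqrt (integral_nonneg fun _ ↦ sq_nonneg _)

lemma sqrt_setIntegral_sq_norm {s : Set α} (hs : μ s ≠ ∞) (f : α → F) :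
    √(∫ x in s, ‖f x‖ ^ 2 ∂μ) = √(μ.real s) * rootMeanSquare μ s f := by
  rw [rootMeanSquare, ← Real.sqrt_mul measureReal_nonneg, ← smul_eq_mul,
    measure_smul_setAverage _ hs]

lemma sqrt_measureReal_le_rpow_mul {s Q : Set α} {C r t η : ℝ} (hC : 0 ≤ C) (hr : 0 ≤ r)
    (ht : 0 ≤ t) (hμQ : μ Q ≠ ∞) (hs : μ s ≤ ENNReal.ofReal (C * (r / t) ^ η) * μ Q) :
    √(μ.real s) ≤ √C * t ^ (-(η / 2)) * r ^ (η / 2) * √(μ.real Q) := by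
  have hreal : μ.real s ≤ C * (r / t) ^ η * μ.real Q := by
    have := ENNReal.toReal_mono (ENNReal.mul_ne_top ENNReal.ofReal_ne_top hμQ) hs
    rwa [ENNReal.toReal_mul, ENNReal.toReal_ofReal (by positivity)] at this
  calc √(μ.real s) ≤ √(C * (r / t) ^ η * μ.real Q) := Real.sqrt_le_sqrt hreal
    _ = √C * (r / t) ^ (η / 2) * √(μ.real Q) := by
      rw [Real.sqrt_mul (by positivity), Real.sqrt_mul hC, Real.sqrt_eq_rpow ((r / t) ^ η),
        ← Real.rpow_mul (by positivity), mul_one_div]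
    _ = √C * t ^ (-(η / 2)) * r ^ (η / 2) * √(μ.real Q) := by
      rw [Real.div_rpow hr ht, Real.rpow_neg ht]
      ring

lemma norm_le_sqrt_mul_rootMeanSquare {u w : Lp F 2 μ} {s : Set α} (hs : μ s ≠ ∞)
    (hle : ∀ᵐ x ∂μ, ‖w x‖ ≤ ‖u x‖) (hoff : ∀ᵐ x ∂μ, x ∉ s → w x = 0) :
    ‖w‖ ≤ √(μ.real s) * rootMeanSquare μ s u := by
  have hnorm : ‖w‖ = √(∫ x, ‖w x‖ ^ 2 ∂μ) := by
    rw [Lp.norm_def, (Lp.memLp w).eLpNorm_eq_integral_rpow_norm two_ne_zero ENNReal.ofNat_ne_top,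
      ENNReal.toReal_ofReal (by positivity), Real.sqrt_eq_rpow]
    simp
  have hoff_sq : ∀ᵐ x ∂μ, x ∉ s → ‖w x‖ ^ 2 = 0 :=
    hoff.mono fun x hx hxs ↦ by simp [hx hxs]
  rw [hnorm, ← sqrt_setIntegral_sq_norm hs, ← setIntegral_eq_integral_of_ae_compl_eq_zero hoff_sq]
  refine Real.sqrt_le_sqrt (integral_mono_ae
    ((Lp.memLp w).integrable_norm_pow two_ne_zero).integrableOn
    ((Lp.memLp u).integrable_norm_pow two_ne_zero).integrableOn (ae_restrict_of_ae ?_))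
  filter_upwards [hle] with x hx
  gcongr

lemma integrableOn_of_memLp {f : α → F} {p : ℝ≥0∞} (hf : MemLp f p μ) (hp : 1 ≤ p) {s : Set α}
    (hs : μ s ≠ ∞) : IntegrableOn f s μ :=
  have : Fact (μ s < ∞) := ⟨hs.lt_top⟩
  (hf.restrict s).integrable hp

lemma setIntegral_norm_le_mul_rootMeanSquare {f : α → F} (hf : MemLp f 2 μ) {s t : Set α}
    (hst : s ⊆ t) (ht : μ t ≠ ∞) :
    ∫ x in s, ‖f x‖ ∂μ ≤ √(μ.real s) * (√(μ.real t) * rootMeanSquare μ t f) := by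
  have : Fact (μ s < ∞) := ⟨measure_lt_top_of_subset hst ht⟩
  have hCS := integral_mul_norm_le_Lp_mul_Lq (μ := μ.restrict s) (f := fun _ : α ↦ (1 : ℝ))
    (g := fun x ↦ ‖f x‖) Real.HolderConjugate.two_two
    (by simpa using memLp_const (1 : ℝ)) (by simpa using (hf.restrict s).norm)
  simp only [norm_norm, norm_one, one_mul, one_pow, integral_const, measureReal_restrict_apply_univ,
    smul_eq_mul, mul_one, ← Real.sqrt_eq_rpow, Real.rpow_two] at hCS
  rw [← sqrt_setIntegral_sq_norm ht]
  refine hCS.trans (mul_le_mul_of_nonneg_left (Real.sqrt_le_sqrt ?_) (Real.sqrt_nonneg _))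
  exact setIntegral_mono_set (hf.integrable_norm_pow two_ne_zero).integrableOn
    (Eventually.of_forall fun x ↦ sq_nonneg _) hst.eventuallyLE

lemma norm_integral_le_norm_integral_add [NormedSpace ℝ F] {f g : α → F} {h : α → ℝ}
    (hf : Integrable f μ) (hg : AEStronglyMeasurable g μ) (hh : Integrable h μ)
    (hle : ∀ᵐ x ∂μ, ‖f x - g x‖ ≤ h x) :
    ‖∫ x, f x ∂μ‖ ≤ ‖∫ x, g x ∂μ‖ + ∫ x, h x ∂μ := by
  have hfg : Integrable (fun x ↦ f x - g x) μ := hh.mono' (hf.1.sub hg) hle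
  have hg_int : Integrable g μ :=
    (hf.sub hfg).congr (Eventually.of_forall fun x ↦ sub_sub_cancel (f x) (g x))
  calc ‖∫ x, f x ∂μ‖ = ‖∫ x, g x ∂μ + ∫ x, (f x - g x) ∂μ‖ := by
        rw [integral_sub hf hg_int, add_sub_cancel]
    _ ≤ ‖∫ x, g x ∂μ‖ + ‖∫ x, (f x - g x) ∂μ‖ := norm_add_le _ _
    _ ≤ ‖∫ x, g x ∂μ‖ + ∫ x, h x ∂μ := by
        gcongr
        exact norm_integral_le_of_norm_le hh hle

lemma norm_setIntegral_le_of_norm_indicator_sub_le [NormedSpace ℝ F] {G : Type*}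
    [NormedAddCommGroup G] {f g : α → F} {u : α → G} {Q S : Set α} {M : ℝ} (hf : MemLp f 2 μ)
    (hg : AEStronglyMeasurable g μ) (hu : MemLp u 2 μ) (hQ : MeasurableSet Q) (hμQ : μ Q ≠ ∞)
    (hS : MeasurableSet S) (hSQ : S ⊆ Q) (hM : 0 ≤ M)
    (hle : ∀ᵐ x ∂μ, ‖Q.indicator f x - g x‖ ≤ S.indicator (fun y ↦ M * ‖u y‖ + ‖f y‖) x) :
    ‖∫ x in Q, f x ∂μ‖ ≤ ‖∫ x, g x ∂μ‖ +
      √(μ.real S) * √(μ.real Q) * (M * rootMeanSquare μ Q u + rootMeanSquare μ Q f) := by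
  have hμS : μ S ≠ ∞ := measure_ne_top_of_subset hSQ hμQ
  have hu_int : IntegrableOn (fun x ↦ M * ‖u x‖) S μ :=
    (integrableOn_of_memLp hu one_le_two hμS).norm.const_mul M
  have hf_int : IntegrableOn (fun x ↦ ‖f x‖) S μ :=
    (integrableOn_of_memLp hf one_le_two hμS).norm
  have hremainder : ∫ x in S, (M * ‖u x‖ + ‖f x‖) ∂μ ≤
      √(μ.real S) * √(μ.real Q) * (M * rootMeanSquare μ Q u + rootMeanSquare μ Q f) := by
    rw [integral_add hu_int hf_int, integral_const_mul]
    grw [setIntegral_norm_le_mul_rootMeanSquare hu hSQ hμQ,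
      setIntegral_norm_le_mul_rootMeanSquare hf hSQ hμQ]
    exact (by ring : _ = _).le
  rw [← integral_indicator hQ]
  refine (norm_integral_le_norm_integral_add
    ((integrableOn_of_memLp hf one_le_two hμQ).integrable_indicator hQ) hg
    ((hu_int.add hf_int).integrable_indicator hS) hle).trans ?_
  rw [integral_indicator hS]
  gcongr
  exact hremainder

end Integral

section Optimization

lemma le_mul_rpow_of_forall_pos_of_pos {m B k X Y θ : ℝ} (hX : 0 < X) (hY : 0 < Y)
    (h : ∀ r : ℝ, 0 < r → m ≤ B * r ^ θ * (k * X / r + Y)) :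
    m ≤ B * (k + 1) * (X ^ θ * Y ^ (1 - θ)) := by
  calc m ≤ B * (X / Y) ^ θ * (k * X / (X / Y) + Y) := h (X / Y) (div_pos hX hY)
    _ = B * (k + 1) * (X ^ θ * Y ^ (1 - θ)) := by
      rw [Real.div_rpow hX.le hY.le, Real.rpow_sub hY, Real.rpow_one]
      field_simp

-- The optimal `r = X / Y` is not available when `X` or `Y` vanishes, so both are first shifted by a
-- positive `δ` that tends to zero.
lemma le_mul_rpow_of_forall_pos {m B k X Y θ : ℝ} (hB : 0 ≤ B) (hk : 0 ≤ k) (hX : 0 ≤ X)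
    (hY : 0 ≤ Y) (hθ0 : 0 ≤ θ) (hθ1 : θ ≤ 1)
    (h : ∀ r : ℝ, 0 < r → m ≤ B * r ^ θ * (k * X / r + Y)) :
    m ≤ B * (k + 1) * (X ^ θ * Y ^ (1 - θ)) := by
  have hshift (δ : ℝ) (hδ : 0 < δ) :
      m ≤ B * (k + 1) * ((X + δ) ^ θ * (Y + δ) ^ (1 - θ)) := by
    refine le_mul_rpow_of_forall_pos_of_pos (by positivity) (by positivity) fun r hr ↦
      (h r hr).trans ?_
    gcongr <;> linarith
  have hX_cont : Continuous fun δ : ℝ ↦ (X + δ) ^ θ :=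
    Continuous.rpow_const (by fun_prop) fun _ ↦ Or.inr hθ0
  have hY_cont : Continuous fun δ : ℝ ↦ (Y + δ) ^ (1 - θ) :=
    Continuous.rpow_const (by fun_prop) fun _ ↦ Or.inr (sub_nonneg.2 hθ1)
  have hlim : Tendsto (fun δ : ℝ ↦ B * (k + 1) * ((X + δ) ^ θ * (Y + δ) ^ (1 - θ))) (𝓝[>] 0)
      (𝓝 (B * (k + 1) * (X ^ θ * Y ^ (1 - θ)))) :=
    tendsto_nhdsWithin_of_tendsto_nhds
      (((hX_cont.mul hY_cont).const_mul _).tendsto' _ _ (by simp))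
  exact ge_of_tendsto hlim (eventually_of_mem self_mem_nhdsWithin hshift)

lemma sq_le_of_le_add_mul_rpow {m a b t X Y η : ℝ} (hm : 0 ≤ m) (ht : 0 ≤ t) (hX : 0 ≤ X)
    (hY : 0 ≤ Y) (h : m ≤ a * X + b * (t ^ (-(η / 2)) * (X ^ (η / 2) * Y ^ (1 - η / 2)))) :
    m ^ 2 ≤ 2 * (a ^ 2 + b ^ 2) *
      (t ^ (-η) * (X ^ 2) ^ (η / 2) * (Y ^ 2) ^ (1 - η / 2) + X ^ 2) := by
  have hsq : (t ^ (-(η / 2)) * (X ^ (η / 2) * Y ^ (1 - η / 2))) ^ 2 =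
      t ^ (-η) * (X ^ 2) ^ (η / 2) * (Y ^ 2) ^ (1 - η / 2) := by
    rw [mul_pow, mul_pow, ← Real.rpow_mul_natCast ht, ← Real.rpow_pow_comm hX,
      ← Real.rpow_pow_comm hY, mul_assoc]
    congr 2
    push_cast
    ring
  rw [← hsq]
  set P := t ^ (-(η / 2)) * (X ^ (η / 2) * Y ^ (1 - η / 2))
  calc m ^ 2 ≤ (a * X + b * P) ^ 2 := pow_le_pow_left₀ hm h 2
    _ ≤ 2 * ((a * X) ^ 2 + (b * P) ^ 2) := add_sq_le
    _ ≤ 2 * (a ^ 2 + b ^ 2) * (P ^ 2 + X ^ 2) := by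
      nlinarith [sq_nonneg (a * P), sq_nonneg (b * X)]

end Optimization

section Operator

variable {E F : Type*} [NormedAddCommGroup E] [MeasurableSpace E]
  {μ : Measure E} [NormedAddCommGroup F]

/-- The conclusion of hypothesis (H6) on a region `U`: the integral of `T u` is at most `L ‖u‖`
for every `u` in the domain of `T` with compact support in `U`. In (H6), `U` is the part of a ball
in `Ω` and `L` is proportional to the square root of the volume of the ball. -/
def CancellationBound [NormedSpace ℝ F] {D : Set (Lp F 2 μ)} (T : D → Lp F 2 μ) (U : Set E)
    (L : ℝ) : Prop :=
  ∀ u : D, ∀ S : Set E, IsCompact S → S ⊆ U →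
    (∀ᵐ x ∂μ, x ∉ S → (u : Lp F 2 μ) x = 0) → ‖∫ x, T u x ∂μ‖ ≤ L * ‖(u : Lp F 2 μ)‖

lemma CancellationBound.mono [NormedSpace ℝ F] {D : Set (Lp F 2 μ)} {T : D → Lp F 2 μ}
    {U V : Set E} {L M : ℝ} (hT : CancellationBound T V L) (hUV : U ⊆ V)
    (hLM : L ≤ M) : CancellationBound T U M := fun u S hS hSU hu ↦
  (hT u S hS (hSU.trans hUV) hu).trans (by gcongr)

variable [NormedSpace ℝ E]

/-- Hypothesis (H5) for an operator `T` with domain `D`: for smooth compactly supported `φ`,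
multiplication by `φ` preserves `D`, and the commutator of `T` with it is dominated by `K |∇φ|`.
Here `w` stands for the product `φ u` as an element of `L²`. -/
def CommutatorBound (𝕜 : Type*) [NormedField 𝕜] [NormedAlgebra ℝ 𝕜]
    [NormedSpace 𝕜 F] {D : Set (Lp F 2 μ)} (T : D → Lp F 2 μ) (K : ℝ) : Prop :=
  ∀ φ : E → 𝕜, ContDiff ℝ (⊤ : ℕ∞) φ → HasCompactSupport φ → ∀ u : D, ∀ w : Lp F 2 μ,
    (w =ᵐ[μ] fun x ↦ φ x • (u : Lp F 2 μ) x) →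
    ∃ hw : w ∈ D, ∀ᵐ x ∂μ,
      ‖T ⟨w, hw⟩ x - φ x • T u x‖ ≤ K * ‖fderiv ℝ φ x‖ * ‖(u : Lp F 2 μ) x‖

lemma CommutatorBound.restrict_real {𝕜 : Type*} [NormedField 𝕜] [NormedAlgebra ℝ 𝕜]
    [NormedSpace 𝕜 F] [NormedSpace ℝ F] [IsScalarTower ℝ 𝕜 F] {D : Set (Lp F 2 μ)}
    {T : D → Lp F 2 μ} {K : ℝ} (hT : CommutatorBound 𝕜 T K) : CommutatorBound ℝ T K := by
  intro φ hφ hφ_supp u w hw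
  let A : ℝ →ₗᵢ[ℝ] 𝕜 := ⟨Algebra.linearMap ℝ 𝕜, norm_algebraMap' 𝕜⟩
  have hfderiv (x : E) : ‖fderiv ℝ (fun y ↦ algebraMap ℝ 𝕜 (φ y)) x‖ = ‖fderiv ℝ φ x‖ := by
    have hφx : DifferentiableAt ℝ φ x := (hφ.differentiable (by simp)).differentiableAt
    have hcomp : HasFDerivAt (fun y ↦ algebraMap ℝ 𝕜 (φ y))
        (A.toContinuousLinearMap.comp (fderiv ℝ φ x)) x :=
      A.toContinuousLinearMap.hasFDerivAt.comp x hφx.hasFDerivAt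
    rw [hcomp.fderiv, A.norm_toContinuousLinearMap_comp]
  have hφ_alg : ContDiff ℝ (⊤ : ℕ∞) fun x ↦ algebraMap ℝ 𝕜 (φ x) :=
    A.toContinuousLinearMap.contDiff.comp hφ
  simpa only [hfderiv, algebraMap_smul] using hT _ hφ_alg (hφ_supp.comp_left (map_zero _)) u w
    (by simpa only [algebraMap_smul] using hw)

variable [NormedSpace ℝ F] {D : Set (Lp F 2 μ)} {T : D → Lp F 2 μ} {Q : Set E}
  [FiniteDimensional ℝ E] [BorelSpace E]

lemma norm_setIntegral_le_of_isSmoothCutoff {K L r : ℝ} {φ : E → ℝ} (hcomm : CommutatorBound ℝ T K)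
    (hK : 0 ≤ K) (hcancel : CancellationBound T Q L) (hL : 0 ≤ L) (hr : 0 ≤ r)
    (hQ : MeasurableSet Q) (hQ_bdd : Bornology.IsBounded Q) (hμQ : μ Q ≠ ∞)
    (hφ : IsSmoothCutoff Q r φ) (u : D) :
    ‖∫ x in Q, T u x ∂μ‖ ≤ L * (√(μ.real Q) * rootMeanSquare μ Q (u : Lp F 2 μ)) +
      √(μ.real (boundaryStrip Q r)) * √(μ.real Q) *
        (K * (4 / r) * rootMeanSquare μ Q (u : Lp F 2 μ) + rootMeanSquare μ Q (T u)) := by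
  have hφ_supp : HasCompactSupport φ :=
    isCompact_of_isClosed_isBounded (isClosed_tsupport φ) (hQ_bdd.subset hφ.tsupport_subset)
  have hφu_le (x : E) : ‖φ x • (u : Lp F 2 μ) x‖ ≤ ‖(u : Lp F 2 μ) x‖ := by
    rw [norm_smul, Real.norm_of_nonneg (hφ.mem_Icc x).1]
    exact mul_le_of_le_one_left (norm_nonneg _) (hφ.mem_Icc x).2
  have hφu : MemLp (fun x ↦ φ x • (u : Lp F 2 μ) x) 2 μ :=
    (Lp.memLp (u : Lp F 2 μ)).of_le
      (hφ.contDiff.continuous.aestronglyMeasurable.smul (Lp.aestronglyMeasurable _))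
      (Eventually.of_forall hφu_le)
  obtain ⟨hwD, hTw⟩ := hcomm φ hφ.contDiff hφ_supp u (hφu.toLp _) hφu.coeFn_toLp
  have hw_le : ∀ᵐ x ∂μ, ‖hφu.toLp _ x‖ ≤ ‖(u : Lp F 2 μ) x‖ :=
    hφu.coeFn_toLp.mono fun x hx ↦ by simpa only [hx] using hφu_le x
  have hw_off : ∀ᵐ x ∂μ, x ∉ tsupport φ → hφu.toLp _ x = 0 :=
    hφu.coeFn_toLp.mono fun x hx hxφ ↦ by
      simp only [hx, image_eq_zero_of_notMem_tsupport hxφ, zero_smul]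
  have hw_norm := norm_le_sqrt_mul_rootMeanSquare hμQ hw_le
    (hw_off.mono fun x hx hxQ ↦ hx fun h ↦ hxQ (hφ.tsupport_subset h))
  refine (norm_setIntegral_le_of_norm_indicator_sub_le (Lp.memLp (T u))
    (Lp.aestronglyMeasurable (T ⟨_, hwD⟩)) (Lp.memLp (u : Lp F 2 μ)) hQ hμQ
    (measurableSet_boundaryStrip hQ r) (boundaryStrip_subset Q r) (by positivity)
    (hTw.mono fun x hx ↦ hφ.norm_indicator_sub_le hK hx)).trans ?_
  gcongr
  exact (hcancel ⟨_, hwD⟩ _ hφ_supp hφ.tsupport_subset hw_off).trans (by gcongr)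

theorem norm_setAverage_le_interpolation {K a C t η : ℝ} (hcomm : CommutatorBound ℝ T K)
    (hK : 0 ≤ K) (hcancel : CancellationBound T Q (a * √(μ.real Q))) (ha : 0 ≤ a) (hC : 0 ≤ C)
    (ht : 0 ≤ t) (hη0 : 0 ≤ η) (hη2 : η ≤ 2) (hQ : MeasurableSet Q)
    (hQ_bdd : Bornology.IsBounded Q) (hμQ0 : μ Q ≠ 0) (hμQ : μ Q ≠ ∞)
    (hstrip : ∀ r : ℝ, 0 < r →
      μ (boundaryStrip Q r) ≤ ENNReal.ofReal (C * (r / t) ^ η) * μ Q) (u : D) :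
    ‖⨍ x in Q, T u x ∂μ‖ ≤ a * rootMeanSquare μ Q (u : Lp F 2 μ) +
      √C * (K * 4 + 1) * (t ^ (-(η / 2)) *
        (rootMeanSquare μ Q (u : Lp F 2 μ) ^ (η / 2) *
          rootMeanSquare μ Q (T u) ^ (1 - η / 2))) := by
  set X := rootMeanSquare μ Q (u : Lp F 2 μ)
  set Y := rootMeanSquare μ Q (T u)
  have hX : 0 ≤ X := rootMeanSquare_nonneg _ _
  have hY : 0 ≤ Y := rootMeanSquare_nonneg _ _
  have hV : 0 < μ.real Q := ENNReal.toReal_pos hμQ0 hμQ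
  have hsplit (r : ℝ) (hr : 0 < r) : ‖⨍ x in Q, T u x ∂μ‖ - a * X ≤
      √C * t ^ (-(η / 2)) * r ^ (η / 2) * (K * 4 * X / r + Y) := by
    obtain ⟨φ, hφ⟩ := exists_isSmoothCutoff Q hr
    rw [sub_le_iff_le_add', setAverage_eq, norm_smul,
      Real.norm_of_nonneg (inv_nonneg.2 measureReal_nonneg), inv_mul_le_iff₀ hV]
    refine (norm_setIntegral_le_of_isSmoothCutoff hcomm hK hcancel (by positivity) hr.le hQ hQ_bdd
      hμQ hφ u).trans ?_
    grw [sqrt_measureReal_le_rpow_mul hC hr.le ht hμQ (hstrip r hr)]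
    apply le_of_eq
    linear_combination (a * X + √C * t ^ (-(η / 2)) * r ^ (η / 2) * (K * 4 * X / r + Y)) *
      Real.mul_self_sqrt hV.le
  have hoptimal := le_mul_rpow_of_forall_pos (by positivity) (by positivity) hX hY
    (by linarith) (by linarith) hsplit
  linear_combination hoptimal

lemma measureReal_ball_le_of_le_measure (ν : Measure E) [ν.IsAddHaarMeasure] {Q : Set E}
    {C c t : ℝ} (hC : 0 < C) (hc : 0 < c) (ht : 0 < t) (hνQ : ν Q ≠ ∞)
    (hmass : ENNReal.ofReal (c * t ^ finrank ℝ E) ≤ ν Q) (z : E) :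
    ν.real (ball z (C * t)) ≤ ν.real (ball 0 1) * C ^ finrank ℝ E / c * ν.real Q := by
  have hmass_real : c * t ^ finrank ℝ E ≤ ν.real Q :=
    (ENNReal.ofReal_le_iff_le_toReal hνQ).1 hmass
  calc ν.real (ball z (C * t)) = (C * t) ^ finrank ℝ E * ν.real (ball 0 1) := by
        rw [measureReal_def, Measure.addHaar_ball_of_pos _ _ (by positivity), ENNReal.toReal_mul,
          ENNReal.toReal_ofReal (by positivity), measureReal_def]
    _ = ν.real (ball 0 1) * C ^ finrank ℝ E / c * (c * t ^ finrank ℝ E) := by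
        rw [mul_pow]
        field_simp
    _ ≤ ν.real (ball 0 1) * C ^ finrank ℝ E / c * ν.real Q := by gcongr

theorem mean_value_interpolation_estimate_general [CompleteSpace F] (ν : Measure E)
    [ν.IsAddHaarMeasure] {Ω : Set E} (hμ : μ = ν.restrict Ω) {K : ℝ} (hK : 0 ≤ K)
    (hcomm : CommutatorBound ℝ T K)
    (hcancel : ∀ z ∈ Ω, ∀ ρ : ℝ, 0 < ρ →
      CancellationBound T (ball z ρ ∩ Ω) (K * ν.real (ball z ρ) ^ ((1 : ℝ) / 2)))
    {η C₁ C₂ c : ℝ} (hη0 : 0 ≤ η) (hη2 : η ≤ 2) (hC₁ : 0 < C₁) (hC₂ : 0 < C₂) (hc : 0 < c) :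
    ∃ C > 0, ∀ t : ℝ, 0 < t → ∀ Q : Set E, MeasurableSet Q → Q ⊆ Ω →
      ENNReal.ofReal (c * t ^ finrank ℝ E) ≤ ν Q → (∃ z ∈ Ω, Q ⊆ ball z (C₁ * t)) →
      (∀ r : ℝ, 0 < r → ν (boundaryStrip Q r) ≤ ENNReal.ofReal (C₂ * (r / t) ^ η) * ν Q) →
      ∀ u : D, ‖⨍ x in Q, T u x ∂μ‖ ^ 2 ≤
        C * (t ^ (-η) * (⨍ x in Q, ‖(u : Lp F 2 μ) x‖ ^ 2 ∂μ) ^ (η / 2) *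
            (⨍ x in Q, ‖T u x‖ ^ 2 ∂μ) ^ (1 - η / 2) +
          ⨍ x in Q, ‖(u : Lp F 2 μ) x‖ ^ 2 ∂μ) := by
  set a : ℝ := K * √(ν.real (ball 0 1) * C₁ ^ finrank ℝ E / c)
  refine ⟨2 * (a ^ 2 + (√C₂ * (K * 4 + 1)) ^ 2), by positivity, ?_⟩
  rintro t ht Q hQ hQΩ hmass ⟨z, hz, hQz⟩ hstrip u
  have hμν {A : Set E} (hA : A ⊆ Q) : μ A = ν A := by
    rw [hμ, Measure.restrict_eq_self _ (hA.trans hQΩ)]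
  have hνQ : ν Q ≠ ∞ := measure_ne_top_of_subset hQz measure_ball_lt_top.ne
  have hνQ0 : ν Q ≠ 0 := ((ENNReal.ofReal_pos.2 (by positivity)).trans_le hmass).ne'
  have hcancelQ : CancellationBound T Q (a * √(μ.real Q)) := by
    refine (hcancel z hz (C₁ * t) (by positivity)).mono (subset_inter hQz hQΩ) ?_
    rw [measureReal_def μ, hμν subset_rfl, ← measureReal_def, ← Real.sqrt_eq_rpow, mul_assoc,
      ← Real.sqrt_mul (by positivity)]
    gcongr
    exact measureReal_ball_le_of_le_measure ν hC₁ hc ht hνQ hmass z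
  simp only [← sq_rootMeanSquare]
  refine sq_le_of_le_add_mul_rpow (norm_nonneg _) ht.le (rootMeanSquare_nonneg _ _)
    (rootMeanSquare_nonneg _ _) (norm_setAverage_le_interpolation hcomm hK hcancelQ (by positivity)
      hC₂.le ht.le hη0 hη2 hQ (isBounded_ball.subset hQz) ?_ ?_ (fun r hr ↦ ?_) u)
  · rwa [hμν subset_rfl]
  · rwa [hμν subset_rfl]
  · rw [hμν (boundaryStrip_subset Q r), hμν subset_rfl]
    exact hstrip r hr

end Operator

/-- Abstract version of the interpolation inequality for mean values (Lemma 7.3 of the paper):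
if `Υ` is a linear operator in `L²(Ω; ℂ^N)` whose commutators with smooth multiplication
operators are dominated by `K|∇φ|` (hypothesis (H5)) and which satisfies the local cancellation
bound (H6), then the mean of `Υu` over a dyadic cube `Q` obeys a weighted interpolation
estimate between the means of `|u|²` and `|Υu|²` over `Q`. -/
theorem mean_value_interpolation_estimate
    (d N : ℕ) (hd : 1 ≤ d) (hN : 1 ≤ N)
    (Ω : Set (EuclideanSpace ℝ (Fin d))) (hΩopen : IsOpen Ω)
    (μ : Measure (EuclideanSpace ℝ (Fin d))) (hμ : μ = volume.restrict Ω)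
    (K : ℝ) (hK : 0 < K)
    (D : Submodule ℂ (Lp (EuclideanSpace ℂ (Fin N)) 2 μ))
    (T : D →ₗ[ℂ] Lp (EuclideanSpace ℂ (Fin N)) 2 μ)
    -- (i) = (H5): commutators with smooth functions are multiplication operators
    -- dominated by `K |∇φ| |u|`
    (hi : ∀ φ : EuclideanSpace ℝ (Fin d) → ℂ, ContDiff ℝ (⊤ : ℕ∞) φ → HasCompactSupport φ →
      ∀ u : D, ∀ w : Lp (EuclideanSpace ℂ (Fin N)) 2 μ,
        (⇑w =ᵐ[μ] fun x => φ x • (↑u : Lp (EuclideanSpace ℂ (Fin N)) 2 μ) x) →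
        ∃ hw : w ∈ D, ∀ᵐ x ∂μ,
          ‖(T ⟨w, hw⟩) x - φ x • (T u) x‖ ≤
            K * ‖fderiv ℝ φ x‖ * ‖(↑u : Lp (EuclideanSpace ℂ (Fin N)) 2 μ) x‖)
    -- (ii) = (H6): local cancellation estimate on balls centered in `Ω`
    (hii : ∀ z ∈ Ω, ∀ ρ : ℝ, 0 < ρ → ∀ u : D, ∀ S : Set (EuclideanSpace ℝ (Fin d)),
        IsCompact S → S ⊆ ball z ρ ∩ Ω →
        (∀ᵐ x ∂μ, x ∉ S → (↑u : Lp (EuclideanSpace ℂ (Fin N)) 2 μ) x = 0) →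
        ‖∫ x, (T u) x ∂μ‖ ≤
          K * (volume (ball z ρ)).toReal ^ ((1 : ℝ) / 2) *
            ‖(↑u : Lp (EuclideanSpace ℂ (Fin N)) 2 μ)‖)
    (η C₁ C₂ c : ℝ) (hη0 : 0 < η) (hη1 : η ≤ 1) (hC₁ : 0 < C₁) (hC₂ : 0 < C₂) (hc : 0 < c) :
    ∃ C > 0, ∀ t : ℝ, 0 < t → t ≤ 1 →
      ∀ Q : Set (EuclideanSpace ℝ (Fin d)), MeasurableSet Q → Q ⊆ Ω →
      ENNReal.ofReal (c * t ^ d) ≤ volume Q →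
      (∃ z ∈ Ω, Q ⊆ ball z (C₁ * t)) →
      (∀ r : ℝ, 0 < r →
        volume {x ∈ Q | EMetric.infEdist x Qᶜ ≤ ENNReal.ofReal r} ≤
          ENNReal.ofReal (C₂ * (r / t) ^ η) * volume Q) →
      ∀ u : D,
        ‖⨍ x in Q, (T u) x ∂μ‖ ^ 2 ≤
          C * (t ^ (-η) *
              (⨍ x in Q, ‖(↑u : Lp (EuclideanSpace ℂ (Fin N)) 2 μ) x‖ ^ 2 ∂μ) ^ (η / 2) *
              (⨍ x in Q, ‖(T u) x‖ ^ 2 ∂μ) ^ (1 - η / 2) +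
            ⨍ x in Q, ‖(↑u : Lp (EuclideanSpace ℂ (Fin N)) 2 μ) x‖ ^ 2 ∂μ) := by
  have hcomm : CommutatorBound ℂ (D := (D : Set (Lp (EuclideanSpace ℂ (Fin N)) 2 μ))) T K := hi
  obtain ⟨C, hC, hbound⟩ := mean_value_interpolation_estimate_general volume hμ hK.le
    hcomm.restrict_real hii hη0.le (by linarith) hC₁ hC₂ hc
  simp only [finrank_euclideanSpace_fin] at hbound
  exact ⟨C, hC, fun t ht _ ↦ hbound t ht⟩
end

section
/- Let H be a complex Hilbert space and let B be a densely defined self-adjoint operator in H (i.e. B coincides with its adjoint). Suppose (P_t)_{t>0} is a family of bounded linear operators on H such that for all t > 0 and all u ∈ H one has P_t u ∈ D(B), B(P_t u) ∈ D(B), and P_t u + t² B(B(P_t u)) = u (so P_t = (1 + t²B²)^{−1}). Then for every u in the closure of the range of B, ∫₀^∞ ‖t B(P_t u)‖² dt/t = ½ ‖u‖². -/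
open MeasureTheory Set
open scoped ENNReal

/-!
Write `xₜ = (1 + t²B²)⁻¹u` and `gₜ = B xₜ`. Symmetry of `B` gives the two-parameter identity
`(t² - s²) ⟪gₜ, gₛ⟫ = ⟪u, xₛ⟫ - ⟪u, xₜ⟫`, so by continuity of `g` the function `t ↦ ⟪u, xₜ⟫` has
derivative `-2t‖gₜ‖²` and the integral telescopes. Since `u` lies in the closure of the domain,
`⟪u, xₜ⟫ → ‖u‖²` as `t → 0`; since it lies in the closure of the range, `⟪u, xₜ⟫ → 0` as `t → ∞`.
-/

section General

open Filter Topology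

theorem lintegral_Ioi_of_hasDerivAt_of_nonneg {f f' : ℝ → ℝ} {a l m : ℝ}
    (hderiv : ∀ t ∈ Ioi a, HasDerivAt f (f' t) t) (hf' : ∀ t ∈ Ioi a, 0 ≤ f' t)
    (ha : Tendsto f (𝓝[>] a) (𝓝 l)) (htop : Tendsto f atTop (𝓝 m)) :
    ∫⁻ t in Ioi a, ENNReal.ofReal (f' t) = ENNReal.ofReal (m - l) := by
  set F := Function.update f a l with hF
  have hFf : ∀ t ∈ Ioi a, F t = f t := fun t ht => Function.update_of_ne (ne_of_gt ht) _ _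
  have hFcont : ContinuousWithinAt F (Ici a) a := by
    rwa [hF, continuousWithinAt_update_same, Ici_sdiff_left]
  have hFderiv : ∀ t ∈ Ioi a, HasDerivAt F (f' t) t := fun t ht =>
    (hderiv t ht).congr_of_eventuallyEq (eventually_of_mem (Ioi_mem_nhds ht) hFf)
  have hFtop : Tendsto F atTop (𝓝 m) :=
    htop.congr' ((eventually_gt_atTop a).mono fun t ht => (hFf t ht).symm)
  rw [← ofReal_integral_eq_lintegral_ofReal
      (integrableOn_Ioi_deriv_of_nonneg hFcont hFderiv hf' hFtop)
      (ae_restrict_of_forall_mem measurableSet_Ioi hf'),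
    integral_Ioi_of_hasDerivAt_of_nonneg hFcont hFderiv hf' hFtop, hF, Function.update_self]

theorem tendsto_inner_zero_of_mem_closure {𝕜 E ι : Type*} [RCLike 𝕜] [SeminormedAddCommGroup E]
    [InnerProductSpace 𝕜 E] {l : Filter ι} {y : ι → E} {D : Set E} {u : E} {C : ℝ}
    (hy : ∀ᶠ i in l, ‖y i‖ ≤ C) (hD : ∀ v ∈ D, Tendsto (fun i => inner 𝕜 (y i) v) l (𝓝 0))
    (hu : u ∈ closure D) : Tendsto (fun i => inner 𝕜 (y i) u) l (𝓝 0) := by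
  rw [Metric.tendsto_nhds]
  intro ε hε
  obtain ⟨v, hv, huv⟩ := Metric.mem_closure_iff.1 hu (ε / (2 * (|C| + 1))) (by positivity)
  rw [dist_eq_norm, lt_div_iff₀ (by positivity)] at huv
  filter_upwards [hy, Metric.tendsto_nhds.1 (hD v hv) (ε / 2) (half_pos hε)] with i hyi hvi
  rw [dist_zero_right] at hvi ⊢
  calc ‖inner 𝕜 (y i) u‖ = ‖inner 𝕜 (y i) (u - v) + inner 𝕜 (y i) v‖ := by
        rw [← inner_add_right, sub_add_cancel]
    _ ≤ ‖y i‖ * ‖u - v‖ + ‖inner 𝕜 (y i) v‖ :=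
        (norm_add_le _ _).trans (by gcongr; exact norm_inner_le_norm _ _)
    _ ≤ (|C| + 1) * ‖u - v‖ + ‖inner 𝕜 (y i) v‖ := by
        gcongr; linarith [le_abs_self C]
    _ < ε := by linarith

end General

section SqResolvent

open Filter Topology RCLike
open scoped InnerProductSpace

variable {𝕜 E : Type*} [RCLike 𝕜] [NormedAddCommGroup E] [InnerProductSpace 𝕜 E]
  {B : E →ₗ.[𝕜] E}

theorem inner_eq_inner_of_mem_graph {F : Type*} [NormedAddCommGroup F] [InnerProductSpace 𝕜 F]
    {T : E →ₗ.[𝕜] F} {S : F →ₗ.[𝕜] E} (hTS : T.IsFormalAdjoint S) {v w' : E} {w v' : F}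
    (h : (v, w) ∈ T.graph) (h' : (v', w') ∈ S.graph) : ⟪w, v'⟫_𝕜 = ⟪v, w'⟫_𝕜 := by
  obtain ⟨a, rfl, rfl⟩ := T.mem_graph_iff.1 h
  obtain ⟨b, rfl, rfl⟩ := S.mem_graph_iff.1 h'
  exact hTS a b

/-- `x` is a solution of `(1 + t²B²) x = u` and `y = B x`. Working with the graph of `B` avoids
carrying proofs of membership in the domain. -/
def IsSqResolventPair (B : E →ₗ.[𝕜] E) (t : ℝ) (u x y : E) : Prop :=
  (x, y) ∈ B.graph ∧ ∃ z, (y, z) ∈ B.graph ∧ x + (t : 𝕜) ^ 2 • z = u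

namespace IsSqResolventPair

section Pair

variable {t s : ℝ} {u x y x' y' v w : E}

theorem sq_mul_inner_eq (hB : B.IsFormalAdjoint B) (h : IsSqResolventPair B t u x y)
    (hvw : (v, w) ∈ B.graph) : (t : 𝕜) ^ 2 * ⟪y, w⟫_𝕜 = ⟪u - x, v⟫_𝕜 := by
  obtain ⟨-, z, hyz, rfl⟩ := h
  rw [add_sub_cancel_left, inner_smul_left, inner_eq_inner_of_mem_graph hB hyz hvw, map_pow,
    conj_ofReal]

theorem sq_mul_re_inner_eq (hB : B.IsFormalAdjoint B) (h : IsSqResolventPair B t u x y)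
    (hvw : (v, w) ∈ B.graph) : t ^ 2 * re ⟪y, w⟫_𝕜 = re ⟪u - x, v⟫_𝕜 := by
  rw [← h.sq_mul_inner_eq hB hvw, ← ofReal_pow, re_ofReal_mul]

theorem re_inner_eq (hB : B.IsFormalAdjoint B) (h : IsSqResolventPair B t u x y) :
    re ⟪u, x⟫_𝕜 = ‖x‖ ^ 2 + t ^ 2 * ‖y‖ ^ 2 := by
  have hyy := h.sq_mul_re_inner_eq hB h.1
  rw [inner_sub_left, map_sub, inner_self_eq_norm_sq, inner_self_eq_norm_sq] at hyy
  linarith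

theorem norm_fst_le (hB : B.IsFormalAdjoint B) (h : IsSqResolventPair B t u x y) :
    ‖x‖ ≤ ‖u‖ := by
  have henergy := h.re_inner_eq hB
  have hCS : re ⟪u, x⟫_𝕜 ≤ ‖u‖ * ‖x‖ := re_inner_le_norm u x
  have : 0 ≤ t ^ 2 * ‖y‖ ^ 2 := by positivity
  nlinarith [norm_nonneg u, norm_nonneg x]

theorem abs_mul_norm_snd_le (hB : B.IsFormalAdjoint B) (h : IsSqResolventPair B t u x y) :
    |t| * ‖y‖ ≤ ‖u‖ := by
  have henergy := h.re_inner_eq hB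
  have hCS : re ⟪u, x⟫_𝕜 ≤ ‖u‖ * ‖x‖ := re_inner_le_norm u x
  have hux : ‖u‖ * ‖x‖ ≤ ‖u‖ * ‖u‖ := by gcongr; exact h.norm_fst_le hB
  refine le_of_sq_le_sq ?_ (norm_nonneg u)
  rw [mul_pow, sq_abs]
  linarith [sq_nonneg ‖x‖]

theorem norm_sub_fst_le (hB : B.IsFormalAdjoint B) (h : IsSqResolventPair B t u x y) :
    ‖u - x‖ ≤ ‖u‖ := by
  have hsq : ‖u - x‖ ^ 2 = ‖u‖ ^ 2 - 2 * re ⟪u, x⟫_𝕜 + ‖x‖ ^ 2 := norm_sub_sq u x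
  have : 0 ≤ t ^ 2 * ‖y‖ ^ 2 := by positivity
  refine le_of_sq_le_sq ?_ (norm_nonneg u)
  linarith [h.re_inner_eq hB, sq_nonneg ‖x‖]

theorem sq_sub_sq_mul_re_inner (hB : B.IsFormalAdjoint B) (h : IsSqResolventPair B t u x y)
    (h' : IsSqResolventPair B s u x' y') :
    (t ^ 2 - s ^ 2) * re ⟪y, y'⟫_𝕜 = re ⟪u, x'⟫_𝕜 - re ⟪u, x⟫_𝕜 := by
  have hts := h.sq_mul_re_inner_eq hB h'.1
  have hst := h'.sq_mul_re_inner_eq hB h.1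
  rw [inner_sub_left, map_sub] at hts hst
  rw [inner_re_symm y', inner_re_symm x'] at hst
  linear_combination hts - hst

theorem sq_mul_norm_sub_snd_le (hB : B.IsFormalAdjoint B) (h : IsSqResolventPair B t u x y)
    (h' : IsSqResolventPair B s u x' y') : s ^ 2 * ‖y' - y‖ ≤ |t ^ 2 - s ^ 2| * ‖y‖ := by
  have hgraph : (x' - x, y' - y) ∈ B.graph := B.graph.sub_mem h'.1 h.1
  have hkey : s ^ 2 * ‖y' - y‖ ^ 2 + ‖x' - x‖ ^ 2 = (t ^ 2 - s ^ 2) * re ⟪y, y' - y⟫_𝕜 := by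
    have ht := h.sq_mul_re_inner_eq hB hgraph
    have hs := h'.sq_mul_re_inner_eq hB hgraph
    have hy : ‖y' - y‖ ^ 2 = re ⟪y', y' - y⟫_𝕜 - re ⟪y, y' - y⟫_𝕜 := by
      rw [← map_sub, ← inner_sub_left, inner_self_eq_norm_sq]
    have hx : ‖x' - x‖ ^ 2 = re ⟪u - x, x' - x⟫_𝕜 - re ⟪u - x', x' - x⟫_𝕜 := by
      rw [← map_sub, ← inner_sub_left, sub_sub_sub_cancel_left, inner_self_eq_norm_sq]
    linear_combination s ^ 2 * hy + hx + hs - ht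
  have hCS : (t ^ 2 - s ^ 2) * re ⟪y, y' - y⟫_𝕜 ≤ |t ^ 2 - s ^ 2| * (‖y‖ * ‖y' - y‖) := by
    refine (le_abs_self _).trans ?_
    rw [abs_mul]
    gcongr
    exact (abs_re_le_norm _).trans (norm_inner_le_norm _ _)
  rcases (norm_nonneg (y' - y)).eq_or_lt' with hzero | hpos
  · rw [hzero, mul_zero]; positivity
  · refine le_of_mul_le_mul_right ?_ hpos
    linarith [sq_nonneg ‖x' - x‖]

end Pair

section Family

variable {u : E} {x g : ℝ → E}

theorem continuousAt_snd (hB : B.IsFormalAdjoint B)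
    (h : ∀ t, 0 < t → IsSqResolventPair B t u (x t) (g t)) {t : ℝ} (ht : 0 < t) :
    ContinuousAt g t := by
  have hbound : ∀ᶠ s in 𝓝 t, ‖g s - g t‖ ≤ |t ^ 2 - s ^ 2| * ‖g t‖ / s ^ 2 := by
    filter_upwards [eventually_gt_nhds ht] with s hs
    rw [le_div_iff₀' (by positivity)]
    exact (h t ht).sq_mul_norm_sub_snd_le hB (h s hs)
  have hlim : Tendsto (fun s => |t ^ 2 - s ^ 2| * ‖g t‖ / s ^ 2) (𝓝 t) (𝓝 0) := by
    have hcont : ContinuousAt (fun s => |t ^ 2 - s ^ 2| * ‖g t‖ / s ^ 2) t := by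
      fun_prop (disch := positivity)
    simpa [ContinuousAt] using hcont
  exact tendsto_iff_norm_sub_tendsto_zero.2
    (squeeze_zero' (Eventually.of_forall fun _ => norm_nonneg _) hbound hlim)

theorem hasDerivAt_re_inner (hB : B.IsFormalAdjoint B)
    (h : ∀ t, 0 < t → IsSqResolventPair B t u (x t) (g t)) {t : ℝ} (ht : 0 < t) :
    HasDerivAt (fun s => re ⟪u, x s⟫_𝕜) (-(2 * t * ‖g t‖ ^ 2)) t := by
  have hlim : Tendsto (fun s => -(t + s) * re ⟪g t, g s⟫_𝕜) (𝓝[≠] t)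
      (𝓝 (-(2 * t * ‖g t‖ ^ 2))) := by
    have hcont : ContinuousAt (fun s => -(t + s) * re ⟪g t, g s⟫_𝕜) t := by
      have := continuousAt_snd hB h ht
      fun_prop
    convert hcont.tendsto.mono_left nhdsWithin_le_nhds using 2
    rw [inner_self_eq_norm_sq]
    ring
  rw [hasDerivAt_iff_tendsto_slope]
  refine hlim.congr' ?_
  filter_upwards [self_mem_nhdsWithin, nhdsWithin_le_nhds (eventually_gt_nhds ht)] with s hst hs
  rw [slope_def_field, eq_div_iff (sub_ne_zero.2 hst),
    ← (h t ht).sq_sub_sq_mul_re_inner hB (h s hs)]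
  ring

theorem tendsto_re_inner_nhdsGT_zero (hB : B.IsFormalAdjoint B)
    (h : ∀ t, 0 < t → IsSqResolventPair B t u (x t) (g t))
    (hu : u ∈ closure (B.domain : Set E)) :
    Tendsto (fun t => re ⟪u, x t⟫_𝕜) (𝓝[>] 0) (𝓝 (‖u‖ ^ 2)) := by
  have hweak : Tendsto (fun t => ⟪u - x t, u⟫_𝕜) (𝓝[>] 0) (𝓝 0) := by
    refine tendsto_inner_zero_of_mem_closure (C := ‖u‖) ?_ (fun v hv => ?_) hu
    · filter_upwards [self_mem_nhdsWithin] with t ht using (h t ht).norm_sub_fst_le hB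
    obtain ⟨w, hvw⟩ := LinearPMap.mem_domain_iff.1 hv
    have hlim : Tendsto (fun t : ℝ => t * (‖u‖ * ‖w‖)) (𝓝[>] 0) (𝓝 0) := by
      simpa using (tendsto_id.mul_const (‖u‖ * ‖w‖)).mono_left (nhdsWithin_le_nhds (a := (0 : ℝ)))
    refine squeeze_zero_norm' ?_ hlim
    filter_upwards [self_mem_nhdsWithin] with t (ht : 0 < t)
    have hg := (h t ht).abs_mul_norm_snd_le hB
    rw [abs_of_pos ht] at hg
    calc ‖⟪u - x t, v⟫_𝕜‖ = t ^ 2 * ‖⟪g t, w⟫_𝕜‖ := by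
          rw [← (h t ht).sq_mul_inner_eq hB hvw, norm_mul, norm_pow, norm_of_nonneg ht.le]
      _ ≤ t ^ 2 * (‖g t‖ * ‖w‖) := by gcongr; exact norm_inner_le_norm _ _
      _ = t * (t * ‖g t‖ * ‖w‖) := by ring
      _ ≤ t * (‖u‖ * ‖w‖) := by gcongr
  have hre := (tendsto_const_nhds (x := ‖u‖ ^ 2)).sub ((continuous_re.tendsto _).comp hweak)
  rw [map_zero, sub_zero] at hre
  refine hre.congr fun t => ?_
  rw [Function.comp_apply, inner_sub_left, map_sub, inner_self_eq_norm_sq, sub_sub_cancel,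
    inner_re_symm]

theorem tendsto_re_inner_atTop (hB : B.IsFormalAdjoint B)
    (h : ∀ t, 0 < t → IsSqResolventPair B t u (x t) (g t)) (hu : u ∈ closure (range B)) :
    Tendsto (fun t => re ⟪u, x t⟫_𝕜) atTop (𝓝 0) := by
  have hweak : Tendsto (fun t => ⟪x t, u⟫_𝕜) atTop (𝓝 0) := by
    refine tendsto_inner_zero_of_mem_closure (C := ‖u‖) ?_ (fun w hw => ?_) hu
    · filter_upwards [eventually_gt_atTop 0] with t ht using (h t ht).norm_fst_le hB
    obtain ⟨v, hvw⟩ := LinearPMap.mem_range_iff.1 hw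
    refine squeeze_zero_norm' ?_ (tendsto_id.const_div_atTop (‖u‖ * ‖v‖))
    filter_upwards [eventually_gt_atTop 0] with t ht
    have hg := (h t ht).abs_mul_norm_snd_le hB
    rw [abs_of_pos ht] at hg
    rw [id, le_div_iff₀' ht]
    calc t * ‖⟪x t, w⟫_𝕜‖ = t * ‖⟪g t, v⟫_𝕜‖ := by
          rw [inner_eq_inner_of_mem_graph hB (h t ht).1 hvw]
      _ ≤ t * (‖g t‖ * ‖v‖) := by gcongr; exact norm_inner_le_norm _ _
      _ = t * ‖g t‖ * ‖v‖ := by ring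
      _ ≤ ‖u‖ * ‖v‖ := by gcongr
  have hre := (continuous_re.tendsto _).comp hweak
  rw [map_zero] at hre
  exact hre.congr fun t => inner_re_symm _ _

end Family

end IsSqResolventPair

theorem resolution_of_identity_selfadjoint_general (hB : B.IsFormalAdjoint B) {u : E}
    {x g : ℝ → E} (h : ∀ t, 0 < t → IsSqResolventPair B t u (x t) (g t))
    (hdom : u ∈ closure (B.domain : Set E)) (hran : u ∈ closure (range B)) :
    ∫⁻ t in Ioi (0 : ℝ), ENNReal.ofReal (‖(t : 𝕜) • g t‖ ^ 2 / t) =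
      ENNReal.ofReal (‖u‖ ^ 2 / 2) := by
  have hderiv : ∀ t ∈ Ioi (0 : ℝ),
      HasDerivAt (fun s => -re ⟪u, x s⟫_𝕜 / 2) (‖(t : 𝕜) • g t‖ ^ 2 / t) t := by
    intro t (ht : 0 < t)
    refine ((IsSqResolventPair.hasDerivAt_re_inner hB h ht).fun_neg.div_const 2).congr_deriv ?_
    rw [norm_smul, norm_of_nonneg ht.le]
    field_simp
  have hzero := (IsSqResolventPair.tendsto_re_inner_nhdsGT_zero hB h hdom).neg.div_const 2
  have htop := (IsSqResolventPair.tendsto_re_inner_atTop hB h hran).neg.div_const 2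
  have hnonneg : ∀ t ∈ Ioi (0 : ℝ), 0 ≤ ‖(t : 𝕜) • g t‖ ^ 2 / t := fun t ht =>
    div_nonneg (sq_nonneg _) (le_of_lt ht)
  rw [lintegral_Ioi_of_hasDerivAt_of_nonneg hderiv hnonneg hzero htop]
  congr 1
  ring

end SqResolvent

/-- **Resolution of the identity** for a densely defined self-adjoint operator `B` on a complex
Hilbert space: for `u` in the closure of the range of `B`,
`∫₀^∞ ‖t B (1 + t²B²)^{-1} u‖² dt/t = ½ ‖u‖²`. Here `g` denotes the function
`t ↦ B((1 + t²B²)^{-1}u) = B(P_t u)`, which is uniquely determined on `(0, ∞)` by the stated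
hypothesis. -/
theorem resolution_of_identity_selfadjoint
    (H : Type*) [NormedAddCommGroup H] [InnerProductSpace ℂ H] [CompleteSpace H]
    (B : H →ₗ.[ℂ] H)
    (hdense : Dense (B.domain : Set H))
    (hsa : IsSelfAdjoint B)
    (P : ℝ → H →L[ℂ] H)
    (hP : ∀ t : ℝ, 0 < t → ∀ u : H, ∃ h₁ : P t u ∈ B.domain,
      ∃ h₂ : B ⟨P t u, h₁⟩ ∈ B.domain,
        P t u + ((t : ℂ) ^ 2) • B ⟨B ⟨P t u, h₁⟩, h₂⟩ = u)
    (u : H) (hu : u ∈ closure (Set.range fun v : B.domain => B v))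
    (g : ℝ → H)
    (hg : ∀ t : ℝ, 0 < t → ∃ h : P t u ∈ B.domain, g t = B ⟨P t u, h⟩) :
    ∫⁻ t in Set.Ioi (0 : ℝ), ENNReal.ofReal (‖t • g t‖ ^ 2 / t) =
      ENNReal.ofReal (‖u‖ ^ 2 / 2) := by
  have hpair : ∀ t, 0 < t → IsSqResolventPair B t u (P t u) (g t) := by
    intro t ht
    obtain ⟨h₁, hgt⟩ := hg t ht
    obtain ⟨_, h₂, hres⟩ := hP t ht u
    exact hgt ▸ ⟨B.mem_graph ⟨_, h₁⟩, _, B.mem_graph ⟨_, h₂⟩, hres⟩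
  have hsymm : B.IsFormalAdjoint B := by
    simpa only [LinearPMap.isSelfAdjoint_def.1 hsa] using B.adjoint_isFormalAdjoint hdense
  simpa only [Complex.coe_algebraMap, Complex.coe_smul] using
    resolution_of_identity_selfadjoint_general hsymm hpair (hdense u) hu
end

section
/- Let H be a complex Hilbert space and let B be a densely defined self-adjoint operator in H. Suppose (P_t)_{t>0} is a family of bounded linear operators on H such that for all t > 0 and all u ∈ H one has P_t u ∈ D(B), B(P_t u) ∈ D(B), and P_t u + t² B(B(P_t u)) = u. Let (T_t)_{t>0} be a family of bounded linear operators on H such that t ↦ T_t u is measurable for each u ∈ H, and let ζ : (0,∞) → [0,∞) be measurable with Z := ∫₀^∞ ζ(r) dr/r < ∞ and such that ‖T_t(s B(P_s u))‖ ≤ ζ(t/s) ‖u‖ for all s, t > 0 and all u ∈ H. Then ∫₀^∞ ‖T_t u‖² dt/t ≤ 2 Z² ‖u‖² for every u in the closure of the range of B. -/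
open MeasureTheory Set
open scoped ENNReal
open Filter Topology
open scoped InnerProductSpace

/-!
With `Ψ_s = sB(1 + s²B²)⁻¹` one has `s d/ds (1 + s²B²)⁻¹ = -2 Ψ_s²`. Integrating this in `s` gives
both the resolution of the identity `u = 2 ∫₀^∞ Ψ_s² u ds/s` on the closure of the range of `B`
and, after pairing with `u`, the square function bound `∫₀^∞ ‖Ψ_s u‖² ds/s ≤ ‖u‖² / 2`.
Applying `T_t` to the first one yields `‖T_t u‖ ≤ 2 ∫₀^∞ ζ(t/s) ‖Ψ_s u‖ ds/s`, and the Schur test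
for the kernel `ζ(t/s)`, whose marginals for the dilation invariant measure `ds/s` are all equal
to `Z`, reduces the claim to the second one.
-/

section SchurTest

variable {α β : Type*} [MeasurableSpace α] [MeasurableSpace β] {μ : Measure α} {ν : Measure β}

lemma sq_lintegral_mul_le {k f : α → ℝ≥0∞} (hk : AEMeasurable k μ) (hf : AEMeasurable f μ) :
    (∫⁻ x, k x * f x ∂μ) ^ 2 ≤ (∫⁻ x, k x ∂μ) * ∫⁻ x, k x * f x ^ 2 ∂μ := by
  have sq_sqrt (x : ℝ≥0∞) : (x ^ (1 / 2 : ℝ)) ^ 2 = x := by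
    rw [← ENNReal.rpow_natCast, ← ENNReal.rpow_mul]; norm_num
  have holder := ENNReal.lintegral_mul_le_Lp_mul_Lq μ Real.HolderConjugate.two_two
    (hk.pow_const (1 / 2 : ℝ)) ((hk.pow_const (1 / 2 : ℝ)).mul hf)
  simp only [Pi.mul_apply, ← mul_assoc, ← sq, ENNReal.rpow_two, mul_pow, sq_sqrt] at holder
  calc (∫⁻ x, k x * f x ∂μ) ^ 2
      ≤ ((∫⁻ x, k x ∂μ) ^ (1 / 2 : ℝ) * (∫⁻ x, k x * f x ^ 2 ∂μ) ^ (1 / 2 : ℝ)) ^ 2 := by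
        gcongr
    _ = (∫⁻ x, k x ∂μ) * ∫⁻ x, k x * f x ^ 2 ∂μ := by rw [mul_pow, sq_sqrt, sq_sqrt]

lemma lintegral_sq_lintegral_mul_le [SFinite μ] [SFinite ν] {k : α → β → ℝ≥0∞}
    (hk : Measurable (Function.uncurry k)) {w : β → ℝ≥0∞} (hw : AEMeasurable w ν) {R C : ℝ≥0∞}
    (hrow : ∀ᵐ x ∂μ, ∫⁻ y, k x y ∂ν ≤ R) (hcol : ∀ᵐ y ∂ν, ∫⁻ x, k x y ∂μ ≤ C) :
    ∫⁻ x, (∫⁻ y, k x y * w y ∂ν) ^ 2 ∂μ ≤ R * C * ∫⁻ y, w y ^ 2 ∂ν := by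
  have hkw : AEMeasurable (Function.uncurry fun x y => k x y * w y ^ 2) (μ.prod ν) :=
    hk.aemeasurable.mul (hw.comp_snd.pow_const 2)
  calc ∫⁻ x, (∫⁻ y, k x y * w y ∂ν) ^ 2 ∂μ
      ≤ ∫⁻ x, R * ∫⁻ y, k x y * w y ^ 2 ∂ν ∂μ := by
        refine lintegral_mono_ae (hrow.mono fun x hx => ?_)
        exact (sq_lintegral_mul_le hk.of_uncurry_left.aemeasurable hw).trans (by gcongr)
    _ = R * ∫⁻ y, (∫⁻ x, k x y ∂μ) * w y ^ 2 ∂ν := by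
        have hrow_meas : AEMeasurable (fun x => ∫⁻ y, k x y * w y ^ 2 ∂ν) μ :=
          hkw.lintegral_prod_right'
        rw [lintegral_const_mul'' _ hrow_meas, lintegral_lintegral_swap hkw]
        simp only [lintegral_mul_const _ hk.of_uncurry_right]
    _ ≤ R * ∫⁻ y, C * w y ^ 2 ∂ν := by
        gcongr 1
        exact lintegral_mono_ae (hcol.mono fun y hy => by gcongr)
    _ = R * C * ∫⁻ y, w y ^ 2 ∂ν := by
        rw [lintegral_const_mul'' _ (hw.pow_const 2), mul_assoc]

end SchurTest

section LogVolume

/-- The measure `dt/t` on `(0, ∞)`, the Haar measure of the multiplicative group of positive reals,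
regarded as a measure on `ℝ`. -/
noncomputable def logVolume : Measure ℝ :=
  (volume.restrict (Ioi 0)).withDensity fun t => ENNReal.ofReal t⁻¹

instance : SFinite logVolume := by
  unfold logVolume
  infer_instance

lemma logVolume_absolutelyContinuous : logVolume ≪ volume.restrict (Ioi 0) :=
  withDensity_absolutelyContinuous _ _

lemma ae_logVolume_pos : ∀ᵐ t ∂logVolume, 0 < t :=
  logVolume_absolutelyContinuous.ae_le (ae_restrict_mem measurableSet_Ioi)

lemma logVolume_restrict_Ioi : logVolume.restrict (Ioi 0) = logVolume :=
  Measure.restrict_eq_self_of_ae_mem ae_logVolume_pos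

lemma setLIntegral_logVolume {s : Set ℝ} (hs : MeasurableSet s) (hs0 : s ⊆ Ioi 0)
    (f : ℝ → ℝ≥0∞) :
    ∫⁻ t in s, f t ∂logVolume = ∫⁻ t in s, ENNReal.ofReal t⁻¹ * f t := by
  rw [logVolume, restrict_withDensity hs, Measure.restrict_restrict hs, inter_eq_left.mpr hs0]
  exact lintegral_withDensity_eq_lintegral_mul_non_measurable _ (by fun_prop) (by simp) _

lemma lintegral_logVolume (f : ℝ → ℝ≥0∞) :
    ∫⁻ t, f t ∂logVolume = ∫⁻ t in Ioi 0, ENNReal.ofReal t⁻¹ * f t := by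
  rw [← setLIntegral_logVolume measurableSet_Ioi subset_rfl, logVolume_restrict_Ioi]

lemma setLIntegral_ofReal_div {s : Set ℝ} (hs : MeasurableSet s) (hs0 : s ⊆ Ioi 0) (f : ℝ → ℝ) :
    ∫⁻ t in s, ENNReal.ofReal (f t / t) = ∫⁻ t in s, ENNReal.ofReal (f t) ∂logVolume := by
  rw [setLIntegral_logVolume hs hs0]
  refine setLIntegral_congr_fun hs fun t ht => ?_
  rw [div_eq_inv_mul, ENNReal.ofReal_mul (inv_nonneg.mpr (hs0 ht).le)]

lemma lintegral_Ioi_ofReal_div (f : ℝ → ℝ) :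
    ∫⁻ t in Ioi (0 : ℝ), ENNReal.ofReal (f t / t) = ∫⁻ t, ENNReal.ofReal (f t) ∂logVolume := by
  rw [setLIntegral_ofReal_div measurableSet_Ioi subset_rfl, logVolume_restrict_Ioi]

lemma lintegral_logVolume_comp {φ φ' : ℝ → ℝ} (hφ : BijOn φ (Ioi 0) (Ioi 0))
    (hderiv : ∀ t, 0 < t → HasDerivAt φ (φ' t) t) (hφ' : ∀ t, 0 < t → |φ' t| = φ t / t)
    (f : ℝ → ℝ≥0∞) : ∫⁻ t, f (φ t) ∂logVolume = ∫⁻ t, f t ∂logVolume := by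
  have change_of_variables := lintegral_image_eq_lintegral_abs_deriv_mul measurableSet_Ioi
    (fun t ht => (hderiv t ht).hasDerivWithinAt) hφ.injOn fun t => ENNReal.ofReal t⁻¹ * f t
  rw [hφ.image_eq] at change_of_variables
  rw [lintegral_logVolume, lintegral_logVolume, change_of_variables]
  refine setLIntegral_congr_fun measurableSet_Ioi fun t ht => ?_
  have hφt : 0 < φ t := hφ.mapsTo ht
  rw [← mul_assoc, hφ' t ht, ← ENNReal.ofReal_mul (div_nonneg hφt.le (le_of_lt ht))]
  congr 2
  field_simp

lemma lintegral_logVolume_comp_div_const {s : ℝ} (hs : 0 < s) (f : ℝ → ℝ≥0∞) :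
    ∫⁻ t, f (t / s) ∂logVolume = ∫⁻ t, f t ∂logVolume := by
  refine lintegral_logVolume_comp (φ' := fun _ => 1 / s) ?_
    (fun t _ => (hasDerivAt_id' t).div_const s) (fun t ht => ?_) f
  · refine InvOn.bijOn (f' := (· * s)) ⟨fun t _ => ?_, fun t _ => ?_⟩
      (fun t ht => div_pos ht hs) (fun t ht => mul_pos ht hs)
    · exact div_mul_cancel₀ t hs.ne'
    · exact mul_div_cancel_right₀ t hs.ne'
  · rw [abs_of_pos (by positivity)]
    field_simp

lemma lintegral_logVolume_comp_const_div {s : ℝ} (hs : 0 < s) (f : ℝ → ℝ≥0∞) :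
    ∫⁻ t, f (s / t) ∂logVolume = ∫⁻ t, f t ∂logVolume := by
  refine lintegral_logVolume_comp (φ' := fun t => s * -(t ^ 2)⁻¹) ?_
    (fun t ht => (hasDerivAt_inv ht.ne').const_mul s) (fun t ht => ?_) f
  · have involution : LeftInvOn (s / ·) (s / ·) (Ioi 0) := fun t _ => div_div_cancel₀ hs.ne'
    exact InvOn.bijOn ⟨involution, involution⟩ (fun t ht => div_pos hs ht)
      (fun t ht => div_pos hs ht)
  · rw [mul_neg, abs_neg, abs_of_pos (by positivity)]
    field_simp

lemma aecover_logVolume_Ioc_inv : AECover logVolume atTop fun b : ℝ => Ioc b⁻¹ b :=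
  ((aecover_Ioi_of_Ioi tendsto_inv_atTop_zero).inter (aecover_Iic tendsto_id)).mono_ac
    logVolume_absolutelyContinuous

lemma ofReal_intervalIntegral_div {f : ℝ → ℝ} (hf : ContinuousOn f (Ioi 0))
    (hf0 : ∀ t, 0 < t → 0 ≤ f t) {a b : ℝ} (ha : 0 < a) (hab : a ≤ b) :
    ENNReal.ofReal (∫ t in a..b, f t / t) = ∫⁻ t in Ioc a b, ENNReal.ofReal (f t) ∂logVolume := by
  have hpos : Icc a b ⊆ Ioi 0 := fun t ht => ha.trans_le ht.1
  have hcont : ContinuousOn (fun t => f t / t) (Icc a b) :=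
    (hf.mono hpos).div continuousOn_id fun t ht => (hpos ht).ne'
  rw [intervalIntegral.integral_of_le hab, ofReal_integral_eq_lintegral_ofReal
    (hcont.integrableOn_Icc.mono_set Ioc_subset_Icc_self),
    setLIntegral_ofReal_div measurableSet_Ioc (Ioc_subset_Icc_self.trans hpos)]
  filter_upwards [ae_restrict_mem measurableSet_Ioc] with t ht
  have ht0 : 0 < t := ha.trans ht.1
  exact div_nonneg (hf0 t ht0) ht0.le

end LogVolume

section SymmetricOperator

variable {𝕜 H : Type*} [RCLike 𝕜] [NormedAddCommGroup H] [InnerProductSpace 𝕜 H] {B : H →ₗ.[𝕜] H}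

lemma inner_eq_inner_of_mem_graph_s11 (hB : B.IsFormalAdjoint B) {x y x' y' : H}
    (hxy : (x, y) ∈ B.graph) (hxy' : (x', y') ∈ B.graph) : ⟪y, x'⟫_𝕜 = ⟪x, y'⟫_𝕜 := by
  obtain ⟨a, rfl, rfl⟩ := B.mem_graph_iff.mp hxy
  obtain ⟨b, rfl, rfl⟩ := B.mem_graph_iff.mp hxy'
  exact hB a b

lemma eq_zero_of_mem_graph [NormedSpace ℝ H] (hB : B.IsFormalAdjoint B) {s : ℝ} (hs : s ≠ 0)
    {p q : H} (hpq : (s • p, q) ∈ B.graph) (hqp : (s • q, -p) ∈ B.graph) : p = 0 ∧ q = 0 := by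
  have inner_eq : ⟪q, q⟫_𝕜 = -⟪p, p⟫_𝕜 := by
    have := inner_eq_inner_of_mem_graph_s11 hB hpq hqp
    rw [inner_smul_right_eq_smul, inner_smul_left_eq_smul, inner_neg_right] at this
    exact smul_right_injective 𝕜 hs this
  have norm_eq : ‖q‖ ^ 2 = -‖p‖ ^ 2 := by
    simpa only [inner_self_eq_norm_sq, map_neg] using congrArg RCLike.re inner_eq
  exact ⟨norm_eq_zero.mp (by nlinarith), norm_eq_zero.mp (by nlinarith)⟩

end SymmetricOperator

/-- `P s = (1 + s²B²)⁻¹` and `Ψ s = sB(1 + s²B²)⁻¹` for every `s > 0`, where `B` is a symmetric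
operator. Both are encoded through the graph of `B`: `sB (P s u) = Ψ s u` and
`sB (Ψ s u) = u - P s u`, domain conditions included. -/
structure IsSquareResolvent {𝕜 H : Type*} [RCLike 𝕜] [NormedAddCommGroup H] [InnerProductSpace 𝕜 H]
    [NormedSpace ℝ H] (B : H →ₗ.[𝕜] H) (P : ℝ → H →L[𝕜] H) (Ψ : ℝ → H → H) : Prop where
  isFormalAdjoint : B.IsFormalAdjoint B
  apply_mem_graph : ∀ {s : ℝ}, 0 < s → ∀ u : H, (s • P s u, Ψ s u) ∈ B.graph
  psi_mem_graph : ∀ {s : ℝ}, 0 < s → ∀ u : H, (s • Ψ s u, u - P s u) ∈ B.graph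

namespace IsSquareResolvent

variable {𝕜 H : Type*} [RCLike 𝕜] [NormedAddCommGroup H] [InnerProductSpace 𝕜 H] [NormedSpace ℝ H]
  {F : Type*} [NormedAddCommGroup F] [NormedSpace 𝕜 F]
  {B : H →ₗ.[𝕜] H} {P : ℝ → H →L[𝕜] H} {Ψ : ℝ → H → H}

lemma of_isFormalAdjoint (hB : B.IsFormalAdjoint B)
    (hP : ∀ t : ℝ, 0 < t → ∀ u : H, ∃ h₁ : P t u ∈ B.domain,
      ∃ h₂ : B ⟨P t u, h₁⟩ ∈ B.domain, P t u + (t : 𝕜) ^ 2 • B ⟨B ⟨P t u, h₁⟩, h₂⟩ = u)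
    {g : ℝ → H → H} (hg : ∀ s : ℝ, 0 < s → ∀ u : H, ∃ h : P s u ∈ B.domain, g s u = B ⟨P s u, h⟩) :
    IsSquareResolvent B P fun s u => s • g s u where
  isFormalAdjoint := hB
  apply_mem_graph {s} hs u := by
    obtain ⟨h₁, hgu⟩ := hg s hs u
    rw [hgu]
    exact B.graph.smul_of_tower_mem s (B.mem_graph ⟨P s u, h₁⟩)
  psi_mem_graph {s} hs u := by
    obtain ⟨h₁, hgu⟩ := hg s hs u
    obtain ⟨_, h₂, hPu⟩ := hP s hs u
    have sub_eq : u - P s u = s • s • B ⟨B ⟨P s u, h₁⟩, h₂⟩ := by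
      rw [sub_eq_iff_eq_add', smul_smul, ← sq, ← algebraMap_smul 𝕜 (s ^ 2), map_pow]
      exact hPu.symm
    rw [hgu, sub_eq]
    exact B.graph.smul_of_tower_mem s (B.graph.smul_of_tower_mem s (B.mem_graph ⟨_, h₂⟩))

section Algebra

variable {s : ℝ}

lemma apply_psi_eq_of_mem_graph (h : IsSquareResolvent B P Ψ) (hs : 0 < s) {x y z : H}
    (hxy : (s • x, y) ∈ B.graph) (hyz : (s • y, z) ∈ B.graph) :
    P s (x + z) = x ∧ Ψ s (x + z) = y := by
  have hpq : (s • (P s (x + z) - x), Ψ s (x + z) - y) ∈ B.graph := by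
    simpa only [smul_sub, Prod.mk_sub_mk] using
      B.graph.sub_mem (h.apply_mem_graph hs (x + z)) hxy
  have hqp : (s • (Ψ s (x + z) - y), -(P s (x + z) - x)) ∈ B.graph := by
    have sub_eq : -(P s (x + z) - x) = x + z - P s (x + z) - z := by abel
    simpa only [smul_sub, Prod.mk_sub_mk, sub_eq] using
      B.graph.sub_mem (h.psi_mem_graph hs (x + z)) hyz
  simpa only [sub_eq_zero] using eq_zero_of_mem_graph h.isFormalAdjoint hs.ne' hpq hqp

lemma apply_psi_smul_eq_of_mem_graph (h : IsSquareResolvent B P Ψ) (hs : 0 < s) {x y : H}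
    (hxy : (x, y) ∈ B.graph) : P s (s • y) = Ψ s x ∧ Ψ s (s • y) = x - P s x := by
  have hyz : (s • (x - P s x), s • y - Ψ s x) ∈ B.graph := by
    simpa only [smul_sub, Prod.smul_mk, Prod.mk_sub_mk] using
      B.graph.sub_mem (B.graph.smul_of_tower_mem s hxy) (h.apply_mem_graph hs x)
  simpa only [add_sub_cancel] using h.apply_psi_eq_of_mem_graph hs (h.psi_mem_graph hs x) hyz

lemma psi_psi (h : IsSquareResolvent B P Ψ) (hs : 0 < s) (u : H) :
    Ψ s (Ψ s u) = P s (u - P s u) := by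
  have hyz : (s • (P s u - P s (P s u)), Ψ s u - Ψ s (P s u)) ∈ B.graph := by
    simpa only [smul_sub, Prod.smul_mk, Prod.mk_sub_mk] using
      B.graph.sub_mem (h.apply_mem_graph hs u) (h.apply_mem_graph hs (P s u))
  simpa only [add_sub_cancel, map_sub] using
    (h.apply_psi_eq_of_mem_graph hs (h.psi_mem_graph hs (P s u)) hyz).2

lemma apply_sub_apply (h : IsSquareResolvent B P Ψ) (hs : 0 < s) {t : ℝ} (ht : 0 < t) (u : H) :
    P s u - P t u = (1 - (s / t) ^ 2) • P s (u - P t u) := by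
  have hxy : (s • P t u, (s / t) • Ψ t u) ∈ B.graph := by
    simpa only [Prod.smul_mk, smul_smul, div_mul_cancel₀ s ht.ne'] using
      B.graph.smul_of_tower_mem (s / t) (h.apply_mem_graph ht u)
  have hyz : (s • (s / t) • Ψ t u, (s / t) ^ 2 • (u - P t u)) ∈ B.graph := by
    have coeff_eq : s * (s / t) = (s / t) ^ 2 * t := by field_simp
    rw [smul_smul, coeff_eq, ← smul_smul]
    exact B.graph.smul_of_tower_mem ((s / t) ^ 2) (h.psi_mem_graph ht u)
  have hPt : P s (P t u) + (s / t) ^ 2 • P s (u - P t u) = P t u := by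
    simpa only [map_add, ContinuousLinearMap.map_smul_of_tower] using
      (h.apply_psi_eq_of_mem_graph hs hxy hyz).1
  calc P s u - P t u = P s u - (P s (P t u) + (s / t) ^ 2 • P s (u - P t u)) := by rw [hPt]
    _ = (1 - (s / t) ^ 2) • P s (u - P t u) := by
      rw [← sub_sub, ← map_sub, sub_smul, one_smul]

lemma inner_psi_psi (h : IsSquareResolvent B P Ψ) (hs : 0 < s) (u v : H) :
    ⟪Ψ s u, Ψ s v⟫_𝕜 = ⟪P s u, v - P s v⟫_𝕜 := by
  have := inner_eq_inner_of_mem_graph_s11 h.isFormalAdjoint (h.apply_mem_graph hs u)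
    (h.psi_mem_graph hs v)
  rw [inner_smul_right_eq_smul, inner_smul_left_eq_smul] at this
  exact smul_right_injective 𝕜 hs.ne' this

lemma inner_apply_left (h : IsSquareResolvent B P Ψ) (hs : 0 < s) (u v : H) :
    ⟪P s u, v⟫_𝕜 = ⟪u, P s v⟫_𝕜 := by
  have inner_eq : ⟪P s u, v - P s v⟫_𝕜 = ⟪u - P s u, P s v⟫_𝕜 := by
    rw [← h.inner_psi_psi hs, ← inner_conj_symm, h.inner_psi_psi hs, inner_conj_symm]
  rw [inner_sub_right, inner_sub_left] at inner_eq
  exact sub_left_injective inner_eq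

lemma inner_psi_psi_left (h : IsSquareResolvent B P Ψ) (hs : 0 < s) (u v : H) :
    ⟪Ψ s (Ψ s u), v⟫_𝕜 = ⟪Ψ s u, Ψ s v⟫_𝕜 := by
  rw [h.psi_psi hs, h.inner_apply_left hs, ← inner_conj_symm, ← h.inner_psi_psi hs,
    inner_conj_symm]

lemma norm_psi_sq (h : IsSquareResolvent B P Ψ) (hs : 0 < s) (u : H) :
    ‖Ψ s u‖ ^ 2 = RCLike.re ⟪P s u, u⟫_𝕜 - ‖P s u‖ ^ 2 := by
  simpa only [inner_sub_right, map_sub, inner_self_eq_norm_sq] using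
    congrArg RCLike.re (h.inner_psi_psi hs u u)

lemma norm_apply_le (h : IsSquareResolvent B P Ψ) (hs : 0 < s) (u : H) : ‖P s u‖ ≤ ‖u‖ := by
  by_contra! hlt
  nlinarith [h.norm_psi_sq hs u, re_inner_le_norm (𝕜 := 𝕜) (P s u) u, sq_nonneg ‖Ψ s u‖,
    norm_nonneg u]

lemma re_inner_apply_nonneg (h : IsSquareResolvent B P Ψ) (hs : 0 < s) (u : H) :
    0 ≤ RCLike.re ⟪P s u, u⟫_𝕜 := by
  linarith [h.norm_psi_sq hs u, sq_nonneg ‖P s u‖, sq_nonneg ‖Ψ s u‖]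

lemma re_inner_apply_le (h : IsSquareResolvent B P Ψ) (hs : 0 < s) (u : H) :
    RCLike.re ⟪P s u, u⟫_𝕜 ≤ ‖u‖ ^ 2 :=
  calc RCLike.re ⟪P s u, u⟫_𝕜 ≤ ‖P s u‖ * ‖u‖ := re_inner_le_norm _ _
    _ ≤ ‖u‖ * ‖u‖ := by gcongr; exact h.norm_apply_le hs u
    _ = ‖u‖ ^ 2 := (sq _).symm

lemma norm_psi_le (h : IsSquareResolvent B P Ψ) (hs : 0 < s) (u : H) : ‖Ψ s u‖ ≤ ‖u‖ := by
  refine (sq_le_sq₀ (norm_nonneg _) (norm_nonneg _)).mp ?_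
  linarith [h.norm_psi_sq hs u, h.re_inner_apply_le hs u, sq_nonneg ‖P s u‖]

lemma norm_sub_apply_le (h : IsSquareResolvent B P Ψ) (hs : 0 < s) {x y : H}
    (hxy : (x, y) ∈ B.graph) : ‖x - P s x‖ ≤ s * ‖y‖ := by
  rw [← (h.apply_psi_smul_eq_of_mem_graph hs hxy).2, ← norm_smul_of_nonneg hs.le y]
  exact h.norm_psi_le hs (s • y)

lemma norm_apply_le_inv_mul (h : IsSquareResolvent B P Ψ) (hs : 0 < s) {x y : H}
    (hxy : (x, y) ∈ B.graph) : ‖P s y‖ ≤ s⁻¹ * ‖x‖ := by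
  rw [le_inv_mul_iff₀ hs, ← norm_smul_of_nonneg hs.le,
    ← ContinuousLinearMap.map_smul_of_tower, (h.apply_psi_smul_eq_of_mem_graph hs hxy).1]
  exact h.norm_psi_le hs x

end Algebra

section Limits

variable {t : ℝ}

lemma equicontinuous_apply (h : IsSquareResolvent B P Ψ) :
    Equicontinuous fun (s : Ioi (0 : ℝ)) (u : H) => P s u := by
  refine (LipschitzWith.uniformEquicontinuous _ 1 fun s => ?_).equicontinuous
  exact AddMonoidHomClass.lipschitz_of_bound_nnnorm (P s) 1 fun u => by
    rw [one_mul]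
    exact h.norm_apply_le s.2 u

lemma tendsto_apply_nhdsGT_zero (h : IsSquareResolvent B P Ψ) (hB : Dense (B.domain : Set H))
    (u : H) : Tendsto (fun s => P s u) (𝓝[>] 0) (𝓝 u) := by
  rw [← tendsto_comp_coe_Ioi_atBot]
  refine (h.equicontinuous_apply u).tendsto_of_mem_closure (f := id)
    continuous_id.continuousWithinAt (fun x hx => ?_) (hB u)
  refine (tendsto_comp_coe_Ioi_atBot (f := fun s => P s x)).mpr ?_
  have bound_tendsto : Tendsto (fun s => s * ‖B ⟨x, hx⟩‖) (𝓝[>] 0) (𝓝 0) :=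
    ((continuous_mul_const _).tendsto' 0 0 (zero_mul _)).mono_left nhdsWithin_le_nhds
  refine tendsto_iff_norm_sub_tendsto_zero.mpr (squeeze_zero' (by simp) ?_ bound_tendsto)
  filter_upwards [self_mem_nhdsWithin] with s hs
  rw [norm_sub_rev]
  exact h.norm_sub_apply_le hs (B.mem_graph ⟨x, hx⟩)

lemma tendsto_apply_atTop (h : IsSquareResolvent B P Ψ) {u : H}
    (hu : u ∈ closure (range fun v : B.domain => B v)) :
    Tendsto (fun s => P s u) atTop (𝓝 0) := by
  rw [← tendsto_comp_val_Ioi_atTop (a := 0)]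
  refine (h.equicontinuous_apply u).tendsto_of_mem_closure (f := fun _ => 0)
    tendsto_const_nhds ?_ hu
  rintro _ ⟨v, rfl⟩
  refine (tendsto_comp_val_Ioi_atTop (f := fun s => P s (B v))).mpr ?_
  have bound_tendsto : Tendsto (fun s : ℝ => s⁻¹ * ‖(v : H)‖) atTop (𝓝 0) := by
    simpa only [zero_mul] using tendsto_inv_atTop_zero.mul_const ‖(v : H)‖
  refine squeeze_zero_norm' ?_ bound_tendsto
  filter_upwards [eventually_gt_atTop 0] with s hs
  exact h.norm_apply_le_inv_mul hs (B.mem_graph v)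

lemma continuousAt_apply (h : IsSquareResolvent B P Ψ) (ht : 0 < t) (u : H) :
    ContinuousAt (fun s => P s u) t := by
  have bound_tendsto : Tendsto (fun s => |1 - (s / t) ^ 2| * ‖u - P t u‖) (𝓝 t) (𝓝 0) := by
    refine Continuous.tendsto' (by fun_prop) _ _ ?_
    rw [div_self ht.ne', one_pow, sub_self, abs_zero, zero_mul]
  refine tendsto_iff_norm_sub_tendsto_zero.mpr (squeeze_zero' (by simp) ?_ bound_tendsto)
  filter_upwards [eventually_gt_nhds ht] with s hs
  rw [h.apply_sub_apply hs ht, norm_smul, Real.norm_eq_abs]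
  gcongr
  exact h.norm_apply_le hs _

lemma continuousAt_apply_comp (h : IsSquareResolvent B P Ψ) (ht : 0 < t) {v : ℝ → H}
    (hv : ContinuousAt v t) : ContinuousAt (fun s => P s (v s)) t := by
  have diff_tendsto : Tendsto (fun s => P s (v s - v t)) (𝓝 t) (𝓝 0) := by
    refine squeeze_zero_norm' ?_ (tendsto_iff_norm_sub_tendsto_zero.mp hv)
    filter_upwards [eventually_gt_nhds ht] with s hs using h.norm_apply_le hs _
  simpa only [ContinuousAt, map_sub, sub_add_cancel, zero_add] using
    diff_tendsto.add (h.continuousAt_apply ht (v t))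

lemma continuousAt_psi_psi (h : IsSquareResolvent B P Ψ) (ht : 0 < t) (u : H) :
    ContinuousAt (fun s => Ψ s (Ψ s u)) t := by
  have hv : ContinuousAt (fun s => u - P s u) t :=
    continuousAt_const.sub (h.continuousAt_apply ht u)
  refine (h.continuousAt_apply_comp ht hv).congr ?_
  filter_upwards [eventually_gt_nhds ht] with s hs using (h.psi_psi hs u).symm

lemma continuousAt_norm_psi (h : IsSquareResolvent B P Ψ) (ht : 0 < t) (u : H) :
    ContinuousAt (fun s => ‖Ψ s u‖) t := by
  have hP := h.continuousAt_apply ht u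
  have sqrt_continuousAt :
      ContinuousAt (fun s => √(RCLike.re ⟪P s u, u⟫_𝕜 - ‖P s u‖ ^ 2)) t := by fun_prop
  refine sqrt_continuousAt.congr ?_
  filter_upwards [eventually_gt_nhds ht] with s hs
  rw [← h.norm_psi_sq hs, Real.sqrt_sq (norm_nonneg _)]

end Limits

section Calculus

variable {t : ℝ}

lemma hasDerivAt_apply (h : IsSquareResolvent B P Ψ) (ht : 0 < t) (u : H) :
    HasDerivAt (fun s => P s u) (-(2 / t) • Ψ t (Ψ t u)) t := by
  have slope_tendsto : Tendsto (fun s => (-(t + s) / t ^ 2) • P s (u - P t u)) (𝓝[≠] t)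
      (𝓝 (-(2 / t) • Ψ t (Ψ t u))) := by
    have coeff_tendsto : Tendsto (fun s => -(t + s) / t ^ 2) (𝓝 t) (𝓝 (-(2 / t))) :=
      Continuous.tendsto' (by fun_prop) _ _ (by field_simp; ring)
    rw [h.psi_psi ht]
    exact (coeff_tendsto.smul (h.continuousAt_apply ht _)).mono_left nhdsWithin_le_nhds
  refine hasDerivAt_iff_tendsto_slope.mpr (slope_tendsto.congr' ?_)
  filter_upwards [self_mem_nhdsWithin, nhdsWithin_le_nhds (eventually_gt_nhds ht)] with s hst hs
  have hst0 : s - t ≠ 0 := sub_ne_zero.mpr hst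
  rw [slope_def_module, h.apply_sub_apply hs ht, smul_smul]
  congr 1
  field_simp
  ring

lemma hasDerivAt_re_inner_apply (h : IsSquareResolvent B P Ψ) (ht : 0 < t) (u : H) :
    HasDerivAt (fun s => RCLike.re ⟪P s u, u⟫_𝕜) (-2 * (‖Ψ t u‖ ^ 2 / t)) t := by
  have := RCLike.reCLM.hasFDerivAt.comp_hasDerivAt t
    ((h.hasDerivAt_apply ht u).inner 𝕜 (hasDerivAt_const t u))
  refine this.congr_deriv ?_
  rw [inner_zero_right, zero_add, inner_smul_left_eq_smul, h.inner_psi_psi_left ht, map_smul,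
    RCLike.reCLM_apply, inner_self_eq_norm_sq, smul_eq_mul]
  ring

lemma two_mul_intervalIntegral_norm_psi_sq_div (h : IsSquareResolvent B P Ψ) (u : H) {a b : ℝ}
    (ha : 0 < a) (hab : a ≤ b) :
    2 * ∫ s in a..b, ‖Ψ s u‖ ^ 2 / s = RCLike.re ⟪P a u, u⟫_𝕜 - RCLike.re ⟪P b u, u⟫_𝕜 := by
  have pos_of_mem : ∀ s ∈ uIcc a b, 0 < s := fun s hs => by
    rw [uIcc_of_le hab] at hs
    exact ha.trans_le hs.1
  have integrand_continuousOn :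
      ContinuousOn (fun s => -2 * (‖Ψ s u‖ ^ 2 / s)) (uIcc a b) := fun s hs =>
    ((((h.continuousAt_norm_psi (pos_of_mem s hs) u).pow 2).div continuousAt_id
      (pos_of_mem s hs).ne').const_mul (-2)).continuousWithinAt
  have ftc := intervalIntegral.integral_eq_sub_of_hasDerivAt
    (fun s hs => h.hasDerivAt_re_inner_apply (pos_of_mem s hs) u)
    integrand_continuousOn.intervalIntegrable
  rw [intervalIntegral.integral_const_mul] at ftc
  linarith

lemma norm_sub_le_two_mul_intervalIntegral (h : IsSquareResolvent B P Ψ) (T : H →L[𝕜] F) (u : H)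
    {a b : ℝ} (ha : 0 < a) (hab : a ≤ b) :
    ‖T (P b u) - T (P a u)‖ ≤ 2 * ∫ s in a..b, ‖T (Ψ s (Ψ s u))‖ / s := by
  let : NormedSpace ℝ F := .restrictScalars ℝ 𝕜 F
  have hderiv (s : ℝ) (hs : 0 < s) :
      HasDerivAt (fun s => T (P s u)) (-(2 / s) • T (Ψ s (Ψ s u))) s := by
    rw [← ContinuousLinearMap.map_smul_of_tower]
    exact (T.restrictScalars ℝ).hasFDerivAt.comp_hasDerivAt s (h.hasDerivAt_apply hs u)
  have bound_continuousOn :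
      ContinuousOn (fun s => 2 * (‖T (Ψ s (Ψ s u))‖ / s)) (uIcc a b) := fun s hs => by
    rw [uIcc_of_le hab] at hs
    have hs0 : 0 < s := ha.trans_le hs.1
    exact (((T.continuous.continuousAt.comp (h.continuousAt_psi_psi hs0 u)).norm.div
      continuousAt_id hs0.ne').const_mul 2).continuousWithinAt
  rw [← intervalIntegral.integral_const_mul]
  refine norm_sub_le_integral_of_norm_deriv_le_of_le hab
    (fun s hs => (hderiv s (ha.trans_le hs.1)).continuousAt.continuousWithinAt)
    (fun s hs => (hderiv s (ha.trans hs.1)).differentiableAt.differentiableWithinAt)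
    (.of_forall fun s hs => ?_) bound_continuousOn.intervalIntegrable
  have hs0 : 0 < s := ha.trans hs.1
  rw [(hderiv s hs0).deriv, norm_smul, norm_neg, Real.norm_of_nonneg (by positivity)]
  exact (div_mul_eq_mul_div₀ ..).trans (mul_div_assoc ..) |>.le

end Calculus

section LIntegral

lemma aemeasurable_enorm_psi (h : IsSquareResolvent B P Ψ) (u : H) :
    AEMeasurable (fun s => ‖Ψ s u‖ₑ) logVolume := by
  have norm_continuousOn : ContinuousOn (fun s => ‖Ψ s u‖) (Ioi 0) := fun s hs =>
    (h.continuousAt_norm_psi hs u).continuousWithinAt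
  simpa only [ofReal_norm] using
    (norm_continuousOn.aemeasurable measurableSet_Ioi).ennreal_ofReal.mono_ac
      logVolume_absolutelyContinuous

lemma two_mul_lintegral_enorm_psi_sq_le (h : IsSquareResolvent B P Ψ) (u : H) :
    2 * ∫⁻ s, ‖Ψ s u‖ₑ ^ 2 ∂logVolume ≤ ‖u‖ₑ ^ 2 := by
  have lintegral_tendsto := aecover_logVolume_Ioc_inv.lintegral_tendsto_of_countably_generated
    ((h.aemeasurable_enorm_psi u).pow_const 2)
  refine le_of_tendsto
    (ENNReal.Tendsto.const_mul lintegral_tendsto (.inr ENNReal.ofNat_ne_top)) ?_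
  filter_upwards [eventually_ge_atTop 1] with b hb
  have hb0 : 0 < b⁻¹ := inv_pos.mpr (zero_lt_one.trans_le hb)
  have hab : b⁻¹ ≤ b := (inv_le_one_of_one_le₀ hb).trans hb
  have norm_continuousOn : ContinuousOn (fun s => ‖Ψ s u‖ ^ 2) (Ioi 0) := fun s hs =>
    ((h.continuousAt_norm_psi hs u).pow 2).continuousWithinAt
  have energy_le : 2 * ∫ s in b⁻¹..b, ‖Ψ s u‖ ^ 2 / s ≤ ‖u‖ ^ 2 := by
    rw [h.two_mul_intervalIntegral_norm_psi_sq_div u hb0 hab]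
    linarith [h.re_inner_apply_le hb0 u, h.re_inner_apply_nonneg (zero_lt_one.trans_le hb) u]
  have := ENNReal.ofReal_le_ofReal energy_le
  rw [ENNReal.ofReal_mul zero_le_two, ofReal_intervalIntegral_div norm_continuousOn
    (fun s _ => sq_nonneg _) hb0 hab] at this
  simpa only [ENNReal.ofReal_pow (norm_nonneg _), ofReal_norm, ENNReal.ofReal_ofNat] using this

lemma enorm_le_two_mul_lintegral_psi_psi (h : IsSquareResolvent B P Ψ)
    (hB : Dense (B.domain : Set H)) (T : H →L[𝕜] F) {u : H}
    (hu : u ∈ closure (range fun v : B.domain => B v)) :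
    ‖T u‖ₑ ≤ 2 * ∫⁻ s, ‖T (Ψ s (Ψ s u))‖ₑ ∂logVolume := by
  have diff_tendsto : Tendsto (fun b : ℝ => ‖T (P b u) - T (P b⁻¹ u)‖ₑ) atTop (𝓝 ‖T u‖ₑ) := by
    have at_zero := (h.tendsto_apply_nhdsGT_zero hB u).comp tendsto_inv_atTop_nhdsGT_zero
    simpa only [Function.comp_def, map_zero, zero_sub, enorm_neg] using
      (((T.continuous.tendsto _).comp (h.tendsto_apply_atTop hu)).sub
        ((T.continuous.tendsto _).comp at_zero)).enorm
  refine le_of_tendsto diff_tendsto ?_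
  filter_upwards [eventually_ge_atTop 1] with b hb
  have hb0 : 0 < b⁻¹ := inv_pos.mpr (zero_lt_one.trans_le hb)
  have hab : b⁻¹ ≤ b := (inv_le_one_of_one_le₀ hb).trans hb
  have norm_continuousOn : ContinuousOn (fun s => ‖T (Ψ s (Ψ s u))‖) (Ioi 0) := fun s hs =>
    (T.continuous.continuousAt.comp (h.continuousAt_psi_psi hs u)).norm.continuousWithinAt
  calc ‖T (P b u) - T (P b⁻¹ u)‖ₑ
      ≤ ENNReal.ofReal (2 * ∫ s in b⁻¹..b, ‖T (Ψ s (Ψ s u))‖ / s) := by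
        rw [← ofReal_norm]
        exact ENNReal.ofReal_le_ofReal (h.norm_sub_le_two_mul_intervalIntegral T u hb0 hab)
    _ = 2 * ∫⁻ s in Ioc b⁻¹ b, ‖T (Ψ s (Ψ s u))‖ₑ ∂logVolume := by
        rw [ENNReal.ofReal_mul zero_le_two, ofReal_intervalIntegral_div norm_continuousOn
          (fun s _ => norm_nonneg _) hb0 hab]
        simp only [ofReal_norm, ENNReal.ofReal_ofNat]
    _ ≤ 2 * ∫⁻ s, ‖T (Ψ s (Ψ s u))‖ₑ ∂logVolume := by
        gcongr
        exact Measure.restrict_le_self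

end LIntegral

end IsSquareResolvent

lemma lintegral_logVolume_sq_lintegral_div_mul_le {k w : ℝ → ℝ≥0∞} (hk : Measurable k)
    (hw : AEMeasurable w logVolume) :
    ∫⁻ t, (∫⁻ s, k (t / s) * w s ∂logVolume) ^ 2 ∂logVolume ≤
      (∫⁻ r, k r ∂logVolume) ^ 2 * ∫⁻ s, w s ^ 2 ∂logVolume := by
  rw [sq (∫⁻ r, k r ∂logVolume)]
  have kernel_measurable : Measurable (Function.uncurry fun t s => k (t / s)) :=
    hk.comp (measurable_fst.div measurable_snd)
  refine lintegral_sq_lintegral_mul_le kernel_measurable hw ?_ ?_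
  · filter_upwards [ae_logVolume_pos] with t ht
    exact (lintegral_logVolume_comp_const_div ht k).le
  · filter_upwards [ae_logVolume_pos] with s hs
    exact (lintegral_logVolume_comp_div_const hs k).le

theorem schur_type_estimate_general
    {𝕜 H F : Type*} [RCLike 𝕜] [NormedAddCommGroup H] [InnerProductSpace 𝕜 H] [NormedSpace ℝ H]
    [NormedAddCommGroup F] [NormedSpace 𝕜 F]
    {B : H →ₗ.[𝕜] H} (hB : Dense (B.domain : Set H))
    {P : ℝ → H →L[𝕜] H} {Ψ : ℝ → H → H} (h : IsSquareResolvent B P Ψ)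
    {T : ℝ → H →L[𝕜] F} {ζ : ℝ → ℝ} (hζ : Measurable ζ)
    (hbound : ∀ s t : ℝ, 0 < s → 0 < t → ∀ u : H, ‖T t (Ψ s u)‖ ≤ ζ (t / s) * ‖u‖)
    {u : H} (hu : u ∈ closure (range fun v : B.domain => B v)) :
    ∫⁻ t in Ioi (0 : ℝ), ENNReal.ofReal (‖T t u‖ ^ 2 / t) ≤
      2 * (∫⁻ r in Ioi (0 : ℝ), ENNReal.ofReal (ζ r / r)) ^ 2 * ENNReal.ofReal (‖u‖ ^ 2) := by
  rw [lintegral_Ioi_ofReal_div, lintegral_Ioi_ofReal_div]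
  simp only [ENNReal.ofReal_pow (norm_nonneg _), ofReal_norm]
  have pointwise_bound : ∀ᵐ t ∂logVolume, ‖T t u‖ₑ ≤
      2 * ∫⁻ s, ENNReal.ofReal (ζ (t / s)) * ‖Ψ s u‖ₑ ∂logVolume := by
    filter_upwards [ae_logVolume_pos] with t ht
    refine (h.enorm_le_two_mul_lintegral_psi_psi hB (T t) hu).trans ?_
    gcongr 1
    refine lintegral_mono_ae ?_
    filter_upwards [ae_logVolume_pos] with s hs
    rw [← ofReal_norm, ← ofReal_norm, ← ENNReal.ofReal_mul' (norm_nonneg _)]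
    exact ENNReal.ofReal_le_ofReal (hbound s t hs ht (Ψ s u))
  calc ∫⁻ t, ‖T t u‖ₑ ^ 2 ∂logVolume
      ≤ ∫⁻ t, 2 ^ 2 * (∫⁻ s, ENNReal.ofReal (ζ (t / s)) * ‖Ψ s u‖ₑ ∂logVolume) ^ 2
          ∂logVolume := by
        refine lintegral_mono_ae (pointwise_bound.mono fun t ht => ?_)
        rw [← mul_pow]
        gcongr
    _ ≤ 2 ^ 2 * ((∫⁻ r, ENNReal.ofReal (ζ r) ∂logVolume) ^ 2 *
          ∫⁻ s, ‖Ψ s u‖ₑ ^ 2 ∂logVolume) := by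
        rw [lintegral_const_mul' _ _ (by finiteness)]
        gcongr 1
        exact lintegral_logVolume_sq_lintegral_div_mul_le hζ.ennreal_ofReal
          (h.aemeasurable_enorm_psi u)
    _ = 2 * (∫⁻ r, ENNReal.ofReal (ζ r) ∂logVolume) ^ 2 *
          (2 * ∫⁻ s, ‖Ψ s u‖ₑ ^ 2 ∂logVolume) := by ring
    _ ≤ 2 * (∫⁻ r, ENNReal.ofReal (ζ r) ∂logVolume) ^ 2 * ‖u‖ₑ ^ 2 := by
        gcongr
        exact h.two_mul_lintegral_enorm_psi_sq_le u

/-- **Schur-type estimate**: let `B` be a densely defined self-adjoint operator on a complex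
Hilbert space, `P_t = (1 + t²B²)^{-1}`, and `g s u = B(P_s u)` (so that
`s • g s u = Ψ_s(B)u = sB(1+s²B²)^{-1}u`). If a measurable family `(T_t)` of bounded operators
satisfies `‖T_t Ψ_s(B) u‖ ≤ ζ(t/s) ‖u‖` with `Z = ∫₀^∞ ζ(r) dr/r < ∞`, then
`∫₀^∞ ‖T_t u‖² dt/t ≤ 2 Z² ‖u‖²` for `u` in the closure of the range of `B`. -/
theorem schur_type_estimate
    (H : Type*) [NormedAddCommGroup H] [InnerProductSpace ℂ H] [CompleteSpace H]
    [MeasurableSpace H] [BorelSpace H]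
    (B : H →ₗ.[ℂ] H)
    (hdense : Dense (B.domain : Set H))
    (hsa : IsSelfAdjoint B)
    (P : ℝ → H →L[ℂ] H)
    (hP : ∀ t : ℝ, 0 < t → ∀ u : H, ∃ h₁ : P t u ∈ B.domain,
      ∃ h₂ : B ⟨P t u, h₁⟩ ∈ B.domain,
        P t u + ((t : ℂ) ^ 2) • B ⟨B ⟨P t u, h₁⟩, h₂⟩ = u)
    (g : ℝ → H → H)
    (hg : ∀ s : ℝ, 0 < s → ∀ u : H, ∃ h : P s u ∈ B.domain, g s u = B ⟨P s u, h⟩)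
    (T : ℝ → H →L[ℂ] H)
    (hTmeas : ∀ u : H, Measurable fun t : ℝ => T t u)
    (ζ : ℝ → ℝ) (hζmeas : Measurable ζ) (hζ0 : ∀ r : ℝ, 0 < r → 0 ≤ ζ r)
    (Z : ℝ≥0∞) (hZ : ∫⁻ r in Set.Ioi (0 : ℝ), ENNReal.ofReal (ζ r / r) = Z) (hZfin : Z ≠ ⊤)
    (hbound : ∀ s t : ℝ, 0 < s → 0 < t → ∀ u : H,
      ‖T t (s • g s u)‖ ≤ ζ (t / s) * ‖u‖) :
    ∀ u ∈ closure (Set.range fun v : B.domain => B v),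
      ∫⁻ t in Set.Ioi (0 : ℝ), ENNReal.ofReal (‖T t u‖ ^ 2 / t) ≤
        2 * Z ^ 2 * ENNReal.ofReal (‖u‖ ^ 2) := by
  intro u hu
  rw [← hZ]
  have hsymm : B.IsFormalAdjoint B := by
    have := LinearPMap.adjoint_isFormalAdjoint hdense
    rwa [LinearPMap.isSelfAdjoint_def.mp hsa] at this
  exact schur_type_estimate_general hdense (.of_isFormalAdjoint hsymm hP hg) hζmeas hbound hu
end
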